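/- Suppose that μ is doubling, that s > 0 satisfies the dimension condition, and that P supports a p-Poincaré inequality, where one of the following holds: (i) p > s and X ↪ L^p_loc; (ii) 1 = p = s and X ↪ L^s(log L)^α_loc for some α ≥ 1; (iii) 1 < p = s and X ↪ L^s(log L)^α_loc for some α > 1; (iv) 1 ≤ p < s and X ↪ L^{s,1}_loc. Then for every u ∈ N¹X there exists v ∈ N¹X which is continuous on P and satisfies u = v C_X-quasi-everywhere. Moreover, in case (i) v is locally (1 − s/p)-Hölder continuous. -/

import Mathlib

/-!
Fix an upper gradient `g ∈ X` of `u`. Write `S(z, r)` for the chain sum, i.e. the sum over `k` of the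
right-hand sides of the Poincaré inequality on the balls `B(z, 2⁻ᵏ r)`. Telescoping averages over
shrinking balls shows that `|u x - u y| ≤ C (S(x, 4δ) + S(y, 4δ))` for Lebesgue points `x`, `y` with
`dist x y ≤ δ` (`edist_le_chainSum`, applied to truncations of `u`, which are locally integrable and
have the same upper gradient). If `S(z, r) → 0` as `r → 0` along a geometric sequence, locally
uniformly in `z`, then `u` restricted to its dense set of Lebesgue points extends to a continuous
function `v`, equal to `u` almost everywhere (`exists_continuous_ae_eq`).

The uniform decay of `S` is where the integrability of `g` enters. If `p > s`, the dimension condition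
makes the terms a geometric series and gives `S(z, r) ≤ C r ^ (1 - s / p)` (`chainSum_le_of_lt`), which
also yields the Hölder estimate. If `p ≤ s`, the average of `g ^ p` over a ball is bounded by an average
of the rearrangement `(g*) ^ p` over an interval `(0, m)` (`average_le_rearr`), so the bound no longer
depends on the centre, and a one-dimensional series remains
(`chain_bound_of_rearr_summable`). It converges by the Zygmund or Lorentz integrability of `g`
(`series_ne_top_of_zygmund_one`, `series_ne_top_of_zygmund`, `series_ne_top_of_lorentz`).

Finally, equality almost everywhere improves to equality quasi-everywhere (`newtonian_of_ae_eq`): the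
function `∞ · χ_{u ≠ v}` has zero norm, and every curve along which both it and `g` have finite integral
has its endpoints outside `{u ≠ v}`. Hence adding it to `g` gives an upper gradient of `v`, and adding
it to `ε g` gives an upper gradient of the indicator function of `{u ≠ v}`.
-/

open MeasureTheory Filter Set Topology Metric ENNReal
open scoped NNReal

noncomputable section

/-- A (non-constant, rectifiable) curve in `P`, parametrized by arc length. -/
structure Curve (P : Type*) [PseudoMetricSpace P] where
  len : ℝ
  len_pos : 0 < len
  toFun : ℝ → P
  lip : LipschitzOnWith 1 toFun (Set.Icc 0 len)

variable {P : Type*}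

/-- The curve integral `∫_γ ρ ds`. -/
def curveLint [PseudoMetricSpace P] (γ : Curve P) (ρ : P → ℝ≥0∞) : ℝ≥0∞ :=
  ∫⁻ t in Set.Icc (0 : ℝ) γ.len, ρ (γ.toFun t)

/-- `g` is an upper gradient of `u`. -/
def IsUpperGradient [PseudoMetricSpace P] [MeasurableSpace P]
    (u : P → EReal) (g : P → ℝ≥0∞) : Prop :=
  Measurable g ∧
    ∀ γ : Curve P, (u (γ.toFun 0) - u (γ.toFun γ.len)).abs ≤ curveLint γ g

/-- A quasi-Banach function lattice over `(P, μ)` with continuous quasi-norm. -/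
structure QBFL (P : Type*) [MeasurableSpace P] (μ : MeasureTheory.Measure P) where
  nrm : (P → EReal) → ℝ≥0∞
  cc : ℝ≥0∞
  one_le_cc : 1 ≤ cc
  cc_lt_top : cc < ⊤
  nrm_eq_zero_iff : ∀ u : P → EReal, Measurable u → (nrm u = 0 ↔ u =ᵐ[μ] 0)
  nrm_smul : ∀ (a : ℝ) (u : P → EReal),
    nrm (fun x => (a : EReal) * u x) = ENNReal.ofReal |a| * nrm u
  nrm_triangle : ∀ u v : P → EReal,
    nrm (fun x => u x + v x) ≤ cc * (nrm u + nrm v)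
  nrm_mono : ∀ u v : P → EReal, (∀ᵐ x ∂μ, (u x).abs ≤ (v x).abs) → nrm u ≤ nrm v
  nrm_rieszFischer : ∀ f : ℕ → P → EReal, (∀ n, ∀ᵐ x ∂μ, 0 ≤ f n x) →
    nrm (fun x => ∑' n, f n x) ≤ ∑' n, cc ^ (n + 1) * nrm (f n)
  nrm_continuous : ∀ (f : ℕ → P → EReal) (u : P → EReal),
    Tendsto (fun n => nrm fun x => f n x - u x) atTop (𝓝 0) →
    Tendsto (fun n => nrm (f n)) atTop (𝓝 (nrm u))

variable [MetricSpace P] [MeasurableSpace P] {μ : MeasureTheory.Measure P}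

/-- The quasi-norm applied to a `ℝ≥0∞`-valued function. -/
def QBFL.nrmE (X : QBFL P μ) (g : P → ℝ≥0∞) : ℝ≥0∞ :=
  X.nrm fun x => (g x : EReal)

/-- The Newtonian quasi-seminorm `‖u‖_{N¹X}`. -/
def QBFL.newt (X : QBFL P μ) (u : P → EReal) : ℝ≥0∞ :=
  X.nrm u + ⨅ g ∈ {g : P → ℝ≥0∞ | IsUpperGradient u g}, X.nrmE g

/-- Membership in the Newtonian space `N¹X`. -/
def QBFL.memN1 (X : QBFL P μ) (u : P → EReal) : Prop :=
  Measurable u ∧ X.newt u < ⊤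

/-- The Sobolev capacity `C_X`. -/
def QBFL.cap (X : QBFL P μ) (E : Set P) : ℝ≥0∞ :=
  ⨅ u ∈ {u : P → EReal | X.memN1 u ∧ ∀ x ∈ E, 1 ≤ u x}, X.newt u


/-- `g` is an `X`-weak upper gradient of `u`: the upper gradient inequality holds for all
curves outside some family of zero `X`-modulus. -/
def IsWeakUpperGradient (X : QBFL P μ) (u : P → EReal) (g : P → ℝ≥0∞) : Prop :=
  Measurable g ∧ ∃ Γ : Set (Curve P),
    (∃ ρ : P → ℝ≥0∞, Measurable ρ ∧ X.nrmE ρ < ⊤ ∧ ∀ γ ∈ Γ, curveLint γ ρ = ⊤) ∧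
    ∀ γ : Curve P, γ ∉ Γ →
      (u (γ.toFun 0) - u (γ.toFun γ.len)).abs ≤ curveLint γ g

/-- The `C_X`-essential supremum of `f` over `B`. -/
def QBFL.capEssSup (X : QBFL P μ) (B : Set P) (f : P → ℝ≥0∞) : ℝ≥0∞ :=
  sInf {t : ℝ≥0∞ | X.cap {x ∈ B | t < f x} = 0}

/-- `μ` is doubling with constant `cdbl`. -/
def IsDoublingWith (μ : MeasureTheory.Measure P) (cdbl : ℝ≥0∞) : Prop :=
  ∀ (x : P) (r : ℝ), 0 < r → μ (ball x (2 * r)) ≤ cdbl * μ (ball x r)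

/-- The exponent `s` satisfies the dimension condition with constant `cs`:
`μ(B(y,r))/μ(B(x,R)) ≥ cs (r/R)^s` whenever `0 < r ≤ R` and `y ∈ B(x,R)`. -/
def DimensionCond (μ : MeasureTheory.Measure P) (s : ℝ) (cs : ℝ≥0∞) : Prop :=
  ∀ (x y : P) (r R : ℝ), 0 < r → r ≤ R → y ∈ ball x R →
    cs * ENNReal.ofReal ((r / R) ^ s) * μ (ball x R) ≤ μ (ball y r)

/-- `P` supports a `p`-Poincaré inequality with constants `cPI` and dilation `lam`. -/
def PoincareInequality (μ : MeasureTheory.Measure P) (p cPI lam : ℝ) : Prop :=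
  ∀ (x : P) (r : ℝ), 0 < r → ∀ u : P → ℝ, LocallyIntegrable u μ →
    ∀ g : P → ℝ≥0∞, IsUpperGradient (fun y => (u y : EReal)) g →
      ENNReal.ofReal (⨍ y in ball x r, |u y - ⨍ z in ball x r, u z ∂μ| ∂μ) ≤
        ENNReal.ofReal (cPI * (2 * r)) *
          ((μ (ball x (lam * r)))⁻¹ * ∫⁻ y in ball x (lam * r), g y ^ p ∂μ) ^ (1 / p)

/-- The decreasing rearrangement `f*` of `f` with respect to `μ`. -/
def decRearr (μ : MeasureTheory.Measure P) (f : P → EReal) (t : ℝ) : ℝ≥0∞ :=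
  sInf {τ : ℝ≥0∞ | μ {x | τ < (f x).abs} ≤ ENNReal.ofReal t}

/-- The Zygmund quasi-norm `‖u χ_E‖_{L^p(log L)^α(E)}`. -/
def zygNorm (μ : MeasureTheory.Measure P) (p α : ℝ) (E : Set P) (u : P → EReal) : ℝ≥0∞ :=
  (∫⁻ t in Set.Ioo (0 : ℝ) (μ E).toReal,
      (decRearr μ (E.indicator u) t *
        ENNReal.ofReal ((1 + Real.log ((μ E).toReal / t)) ^ α)) ^ p) ^ (1 / p)

/-- The Lorentz norm `‖u‖_{L^{s,1}}`. -/
def lorentzNorm (μ : MeasureTheory.Measure P) (s : ℝ) (u : P → EReal) : ℝ≥0∞ :=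
  ENNReal.ofReal (1 / s) *
    ∫⁻ t in Set.Ioi (0 : ℝ), decRearr μ u t * ENNReal.ofReal (t ^ (1 / s - 1))

/-- `X ↪ L^p_loc`. -/
def EmbedsLpLoc (X : QBFL P μ) (p : ℝ) : Prop :=
  ∀ (x : P) (r : ℝ), 0 < r → ∃ c : ℝ≥0∞, c < ⊤ ∧ ∀ u : P → EReal,
    (∫⁻ y in ball x r, (u y).abs ^ p ∂μ) ^ (1 / p) ≤ c * X.nrm ((ball x r).indicator u)

/-- `X ↪ L^s(log L)^α_loc`. -/
def EmbedsZygmundLoc (X : QBFL P μ) (s α : ℝ) : Prop :=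
  ∀ (x : P) (r : ℝ), 0 < r → ∃ c : ℝ≥0∞, c < ⊤ ∧ ∀ u : P → EReal,
    zygNorm μ s α (ball x r) u ≤ c * X.nrm ((ball x r).indicator u)

/-- `X ↪ L^{s,1}_loc`. -/
def EmbedsLorentzLoc (X : QBFL P μ) (s : ℝ) : Prop :=
  ∀ (x : P) (r : ℝ), 0 < r → ∃ c : ℝ≥0∞, c < ⊤ ∧ ∀ u : P → EReal,
    lorentzNorm μ s ((ball x r).indicator u) ≤ c * X.nrm ((ball x r).indicator u)

set_option linter.unusedSectionVars false

/-! ### Almost everywhere and quasi-everywhere equality -/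

/-- Let `u = v` off `N` with `v` continuous, and let `γ` have finite `g`-length and meet `N` in zero
length. Comparing `u (γ 0)` with `u (γ t) = v (γ t)` along parameters `t → 0` with `γ t ∉ N` shows
that `u` and `v` agree at the starting point of `γ`. -/
lemma curve_start_eq [BorelSpace P] {u : P → EReal} {g : P → ℝ≥0∞} {v : P → ℝ} {N : Set P}
    (hg : IsUpperGradient u g) (hv : Continuous v) (hN : MeasurableSet N)
    (huv : ∀ x ∉ N, u x = (v x : EReal)) (γ : Curve P) (h1 : curveLint γ g ≠ ⊤)
    (h2 : curveLint γ (N.indicator fun _ => ⊤) ≠ ⊤) :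
    u (γ.toFun 0) = (v (γ.toFun 0) : EReal) := by
  have hγm : AEMeasurable γ.toFun (volume.restrict (Icc 0 γ.len)) :=
    γ.lip.continuousOn.aemeasurable measurableSet_Icc
  have hae : ∀ᵐ t ∂volume.restrict (Icc 0 γ.len), γ.toFun t ∉ N := by
    have hm : Measurable (N.indicator fun _ : P => (⊤ : ℝ≥0∞)) := measurable_const.indicator hN
    filter_upwards [ae_lt_top' (hm.comp_aemeasurable hγm) h2] with t ht hmem
    simp [hmem] at ht
  have hex : ∀ n : ℕ, ∃ t : ℝ, 0 < t ∧ t < γ.len ∧ t < 1 / ((n : ℝ) + 1) ∧ γ.toFun t ∉ N := by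
    intro n
    by_contra hcon
    push Not at hcon
    have hpos : 0 < min γ.len (1 / ((n : ℝ) + 1)) := lt_min γ.len_pos (by positivity)
    have hsub : Ioo 0 (min γ.len (1 / ((n : ℝ) + 1))) ⊆ {t | ¬ γ.toFun t ∉ N} ∩ Icc 0 γ.len := by
      intro t ht
      have h3 := lt_min_iff.1 ht.2
      exact ⟨not_not.2 (hcon t ht.1 h3.1 h3.2), ht.1.le, h3.1.le⟩
    have h0 : volume (Ioo 0 (min γ.len (1 / ((n : ℝ) + 1)))) = 0 := by
      refine measure_mono_null hsub ?_
      rw [← Measure.restrict_apply' measurableSet_Icc]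
      exact ae_iff.1 hae
    rw [Real.volume_Ioo, sub_zero, ENNReal.ofReal_eq_zero] at h0
    linarith
  choose t ht0 htl htn htN using hex
  have ht_lim : Tendsto t atTop (𝓝 0) :=
    squeeze_zero (fun n => (ht0 n).le) (fun n => (htn n).le) tendsto_one_div_add_atTop_nhds_zero_nat
  have hle : ∀ n, (u (γ.toFun 0) - (v (γ.toFun (t n)) : EReal)).abs ≤
      ∫⁻ τ in Icc 0 (t n), g (γ.toFun τ) := by
    intro n
    have h3 := hg.2 ⟨t n, ht0 n, γ.toFun, γ.lip.mono (Icc_subset_Icc_right (htl n).le)⟩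
    rw [← huv _ (htN n)]
    exact h3
  have hlim : Tendsto (fun n => ∫⁻ τ in Icc 0 (t n), g (γ.toFun τ)) atTop (𝓝 0) := by
    have h4 := tendsto_setLIntegral_zero (μ := volume.restrict (Icc 0 γ.len))
      (f := fun τ => g (γ.toFun τ)) h1 (l := atTop) (s := fun n => Icc 0 (t n)) (by
        refine tendsto_of_tendsto_of_tendsto_of_le_of_le tendsto_const_nhds
          (h := fun n => ENNReal.ofReal (t n)) ?_ (fun _ => zero_le) (fun n => ?_)
        · simpa using ENNReal.tendsto_ofReal ht_lim
        · refine (Measure.restrict_apply_le _ _).trans ?_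
          simp)
    refine h4.congr fun n => ?_
    rw [Measure.restrict_restrict measurableSet_Icc,
      inter_eq_left.2 (Icc_subset_Icc_right (htl n).le)]
  have hfin : (u (γ.toFun 0) - (v (γ.toFun (t 0)) : EReal)).abs < ⊤ :=
    ((hle 0).trans (lintegral_mono_set (Icc_subset_Icc_right (htl 0).le))).trans_lt
      (lt_top_iff_ne_top.2 h1)
  induction hu : u (γ.toFun 0) with
  | bot => simp [hu] at hfin
  | top => simp [hu] at hfin
  | coe c =>
    have hγ : Tendsto (fun n => γ.toFun (t n)) atTop (𝓝 (γ.toFun 0)) := by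
      have hc : ContinuousWithinAt γ.toFun (Icc 0 γ.len) 0 :=
        γ.lip.continuousOn 0 ⟨le_rfl, γ.len_pos.le⟩
      exact hc.tendsto.comp (tendsto_nhdsWithin_iff.2
        ⟨ht_lim, Eventually.of_forall fun n => ⟨(ht0 n).le, (htl n).le⟩⟩)
    have h5 : Tendsto (fun n => ENNReal.ofReal |c - v (γ.toFun (t n))|) atTop
        (𝓝 (ENNReal.ofReal |c - v (γ.toFun 0)|)) :=
      ENNReal.tendsto_ofReal ((tendsto_const_nhds.sub ((hv.tendsto _).comp hγ)).abs)
    have h6 : ENNReal.ofReal |c - v (γ.toFun 0)| ≤ 0 := by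
      refine le_of_tendsto_of_tendsto' h5 hlim fun n => ?_
      have := hle n
      rwa [hu, ← EReal.coe_sub, EReal.abs_def] at this
    rw [nonpos_iff_eq_zero, ENNReal.ofReal_eq_zero] at h6
    have h7 : c = v (γ.toFun 0) := by
      have := abs_nonpos_iff.1 h6
      linarith
    rw [h7]

/-- The curve traversed backwards. -/
def Curve.reverse (γ : Curve P) : Curve P where
  len := γ.len
  len_pos := γ.len_pos
  toFun := fun t => γ.toFun (γ.len - t)
  lip := by
    intro a ha b hb
    have h := γ.lip (x := γ.len - a) ⟨by linarith [ha.2], by linarith [ha.1]⟩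
      (y := γ.len - b) ⟨by linarith [hb.2], by linarith [hb.1]⟩
    refine h.trans (le_of_eq ?_)
    rw [edist_sub_left]

lemma curveLint_reverse (γ : Curve P) (ρ : P → ℝ≥0∞) :
    curveLint γ.reverse ρ = curveLint γ ρ := by
  have h := (Measure.measurePreserving_sub_left (volume : Measure ℝ) γ.len).setLIntegral_comp_preimage_emb
    (measurableEmbedding_subLeft γ.len) (fun t => ρ (γ.toFun t)) (Icc 0 γ.len)
  have h2 : (fun x => γ.len - x) ⁻¹' (Icc 0 γ.len) = Icc 0 γ.len := by
    simp
  rw [h2] at h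
  exact h

lemma curve_end_eq [BorelSpace P] {u : P → EReal} {g : P → ℝ≥0∞} {v : P → ℝ} {N : Set P}
    (hg : IsUpperGradient u g) (hv : Continuous v) (hN : MeasurableSet N)
    (huv : ∀ x ∉ N, u x = (v x : EReal)) (γ : Curve P) (h1 : curveLint γ g ≠ ⊤)
    (h2 : curveLint γ (N.indicator fun _ => ⊤) ≠ ⊤) :
    u (γ.toFun γ.len) = (v (γ.toFun γ.len) : EReal) := by
  have h := curve_start_eq hg hv hN huv γ.reverse (by rwa [curveLint_reverse])
    (by rwa [curveLint_reverse])
  simpa [Curve.reverse] using h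

lemma QBFL.nrmE_add_le (X : QBFL P μ) (f g : P → ℝ≥0∞) :
    X.nrmE (fun x => f x + g x) ≤ X.cc * (X.nrmE f + X.nrmE g) := by
  have h := X.nrm_triangle (fun x => (f x : EReal)) (fun x => (g x : EReal))
  simpa only [QBFL.nrmE, EReal.coe_ennreal_add] using h

lemma QBFL.nrmE_smul (X : QBFL P μ) (a : ℝ) (ha : 0 ≤ a) (g : P → ℝ≥0∞) :
    X.nrmE (fun x => ENNReal.ofReal a * g x) = ENNReal.ofReal a * X.nrmE g := by
  have h := X.nrm_smul a (fun x => (g x : EReal))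
  rw [abs_of_nonneg ha] at h
  simpa only [QBFL.nrmE, EReal.coe_ennreal_mul, EReal.coe_ennreal_ofReal, max_eq_left ha] using h

lemma QBFL.nrmE_null (X : QBFL P μ) {N : Set P} (hN : MeasurableSet N) (h0 : μ N = 0) (c : ℝ≥0∞) :
    X.nrmE (N.indicator fun _ => c) = 0 := by
  refine (X.nrm_eq_zero_iff _ ?_).2 ?_
  · exact measurable_coe_ennreal_ereal.comp (measurable_const.indicator hN)
  · have : ∀ᵐ x ∂μ, x ∉ N := by simpa [ae_iff] using h0
    filter_upwards [this] with x hx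
    simp [hx]

/-- A function in `X` is finite almost everywhere, because `∞ · χ_A` equals twice itself. -/
lemma QBFL.ae_abs_ne_top (X : QBFL P μ) {u : P → EReal} (hu : Measurable u) (h : X.nrm u ≠ ⊤) :
    ∀ᵐ x ∂μ, (u x).abs ≠ ⊤ := by
  set A : Set P := {x | (u x).abs = ⊤} with hA
  have hAm : MeasurableSet A := by
    have : A = {x | u x = ⊤} ∪ {x | u x = ⊥} := by
      ext x
      simp only [hA, mem_ofPred_eq, mem_union]
      induction hx : u x <;> simp [EReal.abs_def]
    rw [this]
    exact (hu (measurableSet_singleton _)).union (hu (measurableSet_singleton _))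
  have hle : X.nrmE (A.indicator fun _ => ⊤) ≤ X.nrm u := by
    refine X.nrm_mono _ _ (Eventually.of_forall fun x => ?_)
    by_cases hx : x ∈ A
    · have : (u x).abs = ⊤ := hx
      rw [this]; exact le_top
    · simp [hx]
  have h2 := X.nrmE_smul 2 (by norm_num) (A.indicator fun _ => ⊤)
  have h3 : (fun x => ENNReal.ofReal 2 * A.indicator (fun _ => (⊤ : ℝ≥0∞)) x) =
      A.indicator fun _ => ⊤ := by
    ext x
    by_cases hx : x ∈ A <;> simp [hx]
  rw [h3] at h2
  have h4 : X.nrmE (A.indicator fun _ => ⊤) = 0 := by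
    by_contra h5
    have h6 : X.nrmE (A.indicator fun _ => ⊤) ≠ ⊤ := ne_top_of_le_ne_top h hle
    have h7 : (1 : ℝ≥0∞) * X.nrmE (A.indicator fun _ => ⊤) =
        ENNReal.ofReal 2 * X.nrmE (A.indicator fun _ => ⊤) := by rw [one_mul]; exact h2
    rw [ENNReal.mul_left_inj h5 h6] at h7
    norm_num at h7
  have h8 := (X.nrm_eq_zero_iff _
    (measurable_coe_ennreal_ereal.comp (measurable_const.indicator hAm))).1 h4
  filter_upwards [h8] with x hx hxA
  have : x ∈ A := hxA
  simp [this] at hx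

lemma newt_le_of_upperGradient (X : QBFL P μ) {u : P → EReal} {g : P → ℝ≥0∞}
    (h : IsUpperGradient u g) : X.newt u ≤ X.nrm u + X.nrmE g :=
  add_le_add le_rfl (iInf₂_le g h)

/-- A continuous function that agrees almost everywhere with a Newtonian function `u` is itself
Newtonian and agrees with `u` quasi-everywhere: off the curves meeting the null set `{u ≠ v}` in
positive length, `u ∘ γ` and `v ∘ γ` are continuous and agree almost everywhere. -/
lemma newtonian_of_ae_eq [BorelSpace P] (X : QBFL P μ) {u : P → EReal} (hu : X.memN1 u)
    {v : P → ℝ} (hv : Continuous v) (huv : ∀ᵐ x ∂μ, u x = (v x : EReal)) :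
    X.memN1 (fun x => (v x : EReal)) ∧ X.cap {x | u x ≠ (v x : EReal)} = 0 := by
  obtain ⟨hum, hun⟩ := hu
  have hvm : Measurable fun x => (v x : EReal) := measurable_coe_real_ereal.comp hv.measurable
  set N : Set P := {x | u x ≠ (v x : EReal)} with hNdef
  have hN : MeasurableSet N := (measurableSet_eq_fun hum hvm).compl
  have hN0 : μ N = 0 := huv
  have huvN : ∀ x ∉ N, u x = (v x : EReal) := fun x hx => not_not.1 hx
  obtain ⟨hunX, hinf⟩ := ENNReal.add_lt_top.1 hun
  obtain ⟨g, hg, hgX⟩ : ∃ g, IsUpperGradient u g ∧ X.nrmE g < ⊤ := by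
    simpa [iInf_lt_iff] using hinf
  set ρ : P → ℝ≥0∞ := N.indicator fun _ => ⊤ with hρ
  have hρm : Measurable ρ := measurable_const.indicator hN
  have hρ0 : X.nrmE ρ = 0 := X.nrmE_null hN hN0 ⊤
  constructor
  · refine ⟨hvm, ?_⟩
    have hG : IsUpperGradient (fun x => (v x : EReal)) (fun x => g x + ρ x) := by
      refine ⟨hg.1.add hρm, fun γ => ?_⟩
      have l1 : curveLint γ g ≤ curveLint γ (fun x => g x + ρ x) :=
        lintegral_mono fun t => le_self_add
      have l2 : curveLint γ ρ ≤ curveLint γ (fun x => g x + ρ x) :=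
        lintegral_mono fun t => le_add_self
      by_cases htop : curveLint γ (fun x => g x + ρ x) = ⊤
      · rw [htop]; exact le_top
      · have k1 := ne_top_of_le_ne_top htop l1
        have k2 := ne_top_of_le_ne_top htop l2
        beta_reduce
        rw [← curve_start_eq hg hv hN huvN γ k1 k2, ← curve_end_eq hg hv hN huvN γ k1 k2]
        exact (hg.2 γ).trans l1
    refine (newt_le_of_upperGradient X hG).trans_lt (ENNReal.add_lt_top.2 ⟨?_, ?_⟩)
    · refine (X.nrm_mono _ u ?_).trans_lt hunX
      filter_upwards [huv] with x hx
      rw [hx]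
    · refine (X.nrmE_add_le g ρ).trans_lt ?_
      rw [hρ0, add_zero]
      exact ENNReal.mul_lt_top X.cc_lt_top hgX
  · -- The indicator of `N` has the upper gradients `ε g + ∞ · χ_N`, whose norms tend to zero.
    have key : ∀ ε : ℝ, 0 < ε → X.cap N ≤ X.cc * (ENNReal.ofReal ε * X.nrmE g) := by
      intro ε hε
      set w : P → EReal := fun x => ((N.indicator (fun _ => 1) x : ℝ≥0∞) : EReal) with hw
      have hwm : Measurable w :=
        measurable_coe_ennreal_ereal.comp (measurable_const.indicator hN)
      have hw0 : X.nrm w = 0 := X.nrmE_null hN hN0 1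
      have hG : IsUpperGradient w (fun x => ENNReal.ofReal ε * g x + ρ x) := by
        refine ⟨(hg.1.const_mul _).add hρm, fun γ => ?_⟩
        by_cases htop : curveLint γ (fun x => ENNReal.ofReal ε * g x + ρ x) = ⊤
        · rw [htop]; exact le_top
        · have l1 : ENNReal.ofReal ε * curveLint γ g ≤
              curveLint γ (fun x => ENNReal.ofReal ε * g x + ρ x) := by
            rw [curveLint, ← lintegral_const_mul' _ _ ENNReal.ofReal_ne_top]
            exact lintegral_mono fun t => le_self_add
          have l2 : curveLint γ ρ ≤ curveLint γ (fun x => ENNReal.ofReal ε * g x + ρ x) :=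
            lintegral_mono fun t => le_add_self
          have k1 : curveLint γ g ≠ ⊤ := by
            intro h
            rw [h, ENNReal.mul_top (by simpa using hε)] at l1
            exact htop (top_le_iff.1 l1)
          have k2 := ne_top_of_le_ne_top htop l2
          have e1 : γ.toFun 0 ∉ N := not_not.2 (curve_start_eq hg hv hN huvN γ k1 k2)
          have e2 : γ.toFun γ.len ∉ N := not_not.2 (curve_end_eq hg hv hN huvN γ k1 k2)
          simp [hw, e1, e2]
      have hnewt : X.newt w ≤ X.cc * (ENNReal.ofReal ε * X.nrmE g) := by
        refine (newt_le_of_upperGradient X hG).trans ?_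
        rw [hw0, zero_add]
        refine (X.nrmE_add_le _ ρ).trans ?_
        rw [hρ0, add_zero, X.nrmE_smul ε hε.le]
      refine (iInf₂_le w ⟨⟨hwm, hnewt.trans_lt ?_⟩, fun x hx => ?_⟩).trans hnewt
      · exact ENNReal.mul_lt_top X.cc_lt_top (ENNReal.mul_lt_top ENNReal.ofReal_lt_top hgX)
      · simp [hw, hx]
    have hlim : Tendsto (fun ε : ℝ => X.cc * (ENNReal.ofReal ε * X.nrmE g)) (𝓝[>] 0) (𝓝 0) := by
      have h1 : Tendsto (fun ε : ℝ => ENNReal.ofReal ε) (𝓝[>] 0) (𝓝 0) := by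
        simpa using (ENNReal.tendsto_ofReal (tendsto_id (x := 𝓝 (0 : ℝ)))).mono_left
          nhdsWithin_le_nhds
      have h2 := ENNReal.Tendsto.const_mul (ENNReal.Tendsto.mul_const h1 (Or.inr hgX.ne))
        (Or.inr X.cc_lt_top.ne)
      simpa using h2
    refine le_antisymm (ge_of_tendsto hlim ?_) zero_le
    filter_upwards [self_mem_nhdsWithin] with ε hε using key ε hε

/-! ### Chains of balls and Lebesgue points -/

/-- The standing assumption on balls forces separability: disjoint balls of a fixed radius form a
countable family, and Vitali covering yields an almost dense such family. -/
lemma secondCountable_of_ball_pos [BorelSpace P] [SigmaFinite μ]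
    (hball : ∀ (x : P) (r : ℝ), 0 < r → 0 < μ (ball x r) ∧ μ (ball x r) < ⊤) :
    SecondCountableTopology P := by
  refine Metric.secondCountable_of_almost_dense_set fun ε hε => ?_
  obtain ⟨U, -, hdisj, hcov⟩ := Vitali.exists_disjoint_subfamily_covering_enlargement_closedBall
    (univ : Set P) id (fun _ => ε / 5) (ε / 5) (fun _ _ => le_rfl) 5 (by norm_num)
  refine ⟨U, ?_, fun x => ?_⟩
  · have h := Measure.countable_meas_pos_of_disjoint_iUnion (μ := μ)
      (As := fun a : U => closedBall (a : P) (ε / 5)) (fun a => measurableSet_closedBall)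
      (fun a b hab => hdisj a.2 b.2 (fun h => hab (Subtype.ext h)))
    have h2 : {i : U | 0 < μ (closedBall (i : P) (ε / 5))} = univ := by
      refine eq_univ_of_forall fun i => ?_
      exact (hball i (ε / 5) (by positivity)).1.trans_le (measure_mono ball_subset_closedBall)
    rw [h2, countable_univ_iff] at h
    exact h.to_set
  · obtain ⟨b, hb, hsub⟩ := hcov x (mem_univ x)
    refine ⟨b, hb, ?_⟩
    have := hsub (mem_closedBall_self (by positivity))
    simp only [id, mem_closedBall] at this
    linarith

/-- The dimension condition with real-valued measures and a real constant. -/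
lemma exists_real_dimensionCond {s : ℝ} {cs : ℝ≥0∞}
    (hball : ∀ (x : P) (r : ℝ), 0 < r → 0 < μ (ball x r) ∧ μ (ball x r) < ⊤)
    (hcs : 0 < cs) (hdim : DimensionCond μ s cs) :
    ∃ c : ℝ, 0 < c ∧ ∀ (x y : P) (r R : ℝ), 0 < r → r ≤ R → y ∈ ball x R →
      c * (r / R) ^ s * μ.real (ball x R) ≤ μ.real (ball y r) := by
  have h1 : min cs 1 ≠ ⊤ := ne_top_of_le_ne_top one_ne_top (min_le_right _ _)
  refine ⟨(min cs 1).toReal, ENNReal.toReal_pos (by simp [hcs.ne']) h1, ?_⟩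
  intro x y r R hr hrR hy
  have h2 : min cs 1 * ENNReal.ofReal ((r / R) ^ s) * μ (ball x R) ≤ μ (ball y r) :=
    le_trans (by gcongr; exact min_le_left _ _) (hdim x y r R hr hrR hy)
  have h3 := ENNReal.toReal_mono (hball y r hr).2.ne h2
  have hR : 0 < R := hr.trans_le hrR
  rwa [ENNReal.toReal_mul, ENNReal.toReal_mul,
    ENNReal.toReal_ofReal (Real.rpow_nonneg (div_nonneg hr.le hR.le) _)] at h3

lemma integrableOn_ball_of_bounded
    (hball : ∀ (x : P) (r : ℝ), 0 < r → 0 < μ (ball x r) ∧ μ (ball x r) < ⊤)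
    {u : P → ℝ} (hu : Measurable u) {b : ℝ} (hb : ∀ x, |u x| ≤ b) (x : P) (r : ℝ) (hr : 0 < r) :
    IntegrableOn u (ball x r) μ := by
  refine Measure.integrableOn_of_bounded (hball x r hr).2.ne hu.aestronglyMeasurable (M := b) ?_
  exact Eventually.of_forall fun y => by simpa using hb y

/-- Almost every point is a Lebesgue point with respect to geometrically shrinking closed balls. -/
lemma ae_tendsto_average_closedBall [BorelSpace P] [SigmaFinite μ]
    (hball : ∀ (x : P) (r : ℝ), 0 < r → 0 < μ (ball x r) ∧ μ (ball x r) < ⊤)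
    {s c : ℝ} (hc : 0 < c) (hdim : ∀ (x y : P) (r R : ℝ), 0 < r → r ≤ R → y ∈ ball x R →
      c * (r / R) ^ s * μ.real (ball x R) ≤ μ.real (ball y r))
    {u : P → ℝ} (hu : Measurable u) {b : ℝ} (hb : ∀ x, |u x| ≤ b) :
    ∀ᵐ z ∂μ, ∀ r : ℝ, 0 < r →
      Tendsto (fun k : ℕ => ⨍ y in closedBall z (r * (1 / 2) ^ k), u y ∂μ) atTop (𝓝 (u z)) := by
  have := secondCountable_of_ball_pos hball
  have : IsLocallyFiniteMeasure μ :=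
    ⟨fun x => ⟨ball x 1, ball_mem_nhds x one_pos, (hball x 1 one_pos).2⟩⟩
  have : IsUnifLocDoublingMeasure μ := by
    refine ⟨⟨Real.toNNReal (c * (1 / 4) ^ s)⁻¹, ?_⟩⟩
    filter_upwards [self_mem_nhdsWithin] with ε hε x
    have hε : 0 < ε := hε
    have h := hdim x x ε (4 * ε) hε (by linarith) (mem_ball_self (by linarith))
    have e1 : ε / (4 * ε) = 1 / 4 := by field_simp
    rw [e1] at h
    have hc' : 0 < c * (1 / 4 : ℝ) ^ s := by positivity
    have h2 : μ.real (ball x (4 * ε)) ≤ (c * (1 / 4) ^ s)⁻¹ * μ.real (ball x ε) := by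
      rw [inv_mul_eq_div, le_div_iff₀ hc']; linarith
    calc μ (closedBall x (2 * ε)) ≤ μ (ball x (4 * ε)) :=
          measure_mono (closedBall_subset_ball (by linarith))
      _ = ENNReal.ofReal (μ.real (ball x (4 * ε))) :=
          (ENNReal.ofReal_toReal (hball x (4 * ε) (by linarith)).2.ne).symm
      _ ≤ ENNReal.ofReal ((c * (1 / 4) ^ s)⁻¹ * μ.real (ball x ε)) := ENNReal.ofReal_le_ofReal h2
      _ = (Real.toNNReal (c * (1 / 4) ^ s)⁻¹ : ℝ≥0∞) * μ (ball x ε) := by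
          rw [ENNReal.ofReal_mul (by positivity), Measure.real,
            ENNReal.ofReal_toReal (hball x ε hε).2.ne]; rfl
      _ ≤ _ := by gcongr; exact ball_subset_closedBall
  have hloc : LocallyIntegrable u μ := fun x =>
    ⟨ball x 1, ball_mem_nhds x one_pos, integrableOn_ball_of_bounded hball hu hb x 1 one_pos⟩
  filter_upwards [IsUnifLocDoublingMeasure.ae_tendsto_average μ hloc 1] with z hz r hr
  refine hz (fun _ => z) (fun k : ℕ => r * (1 / 2) ^ k) ?_ ?_
  · refine tendsto_nhdsWithin_iff.2 ⟨?_, Eventually.of_forall fun k => ?_⟩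
    · simpa using (tendsto_pow_atTop_nhds_zero_of_lt_one (r := (1 / 2 : ℝ))
        (by norm_num) (by norm_num)).const_mul r
    · exact mul_pos hr (by positivity)
  · exact Eventually.of_forall fun k => mem_closedBall_self (by positivity)

/-- Comparison of an average over a subset of `B` with a constant. -/
lemma abs_average_sub_le {A B : Set P} (hAB : A ⊆ B)
    (hA0 : 0 < μ A) (hB : μ B ≠ ⊤) {u : P → ℝ} (hu : IntegrableOn u B μ) {K : ℝ}
    (hK : μ.real B ≤ K * μ.real A) (a : ℝ) :
    |(⨍ y in A, u y ∂μ) - a| ≤ K * ⨍ y in B, |u y - a| ∂μ := by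
  have hAtop : μ A ≠ ⊤ := ne_top_of_le_ne_top hB (measure_mono hAB)
  have hAr : 0 < μ.real A := ENNReal.toReal_pos hA0.ne' hAtop
  have hBr : 0 < μ.real B := hAr.trans_le (measureReal_mono hAB hB)
  have hBint : IntegrableOn (fun y => u y - a) B μ := hu.sub (integrableOn_const hB)
  have hAint : IntegrableOn u A μ := hu.mono_set hAB
  have e1 : (⨍ y in A, u y ∂μ) - a = (μ.real A)⁻¹ * ∫ y in A, (u y - a) ∂μ := by
    rw [setAverage_eq, integral_sub hAint (integrableOn_const hAtop), setIntegral_const]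
    simp only [smul_eq_mul]
    field_simp
  have e2 : (⨍ y in B, |u y - a| ∂μ) = (μ.real B)⁻¹ * ∫ y in B, |u y - a| ∂μ := by
    rw [setAverage_eq, smul_eq_mul]
  have h1 : |∫ y in A, (u y - a) ∂μ| ≤ ∫ y in B, |u y - a| ∂μ := by
    refine (abs_integral_le_integral_abs).trans ?_
    exact setIntegral_mono_set hBint.abs (Eventually.of_forall fun y => abs_nonneg _)
      (LE.le.eventuallyLE hAB)
  have hJ : 0 ≤ ∫ y in B, |u y - a| ∂μ := integral_nonneg fun y => abs_nonneg _
  rw [e1, e2, abs_mul, abs_of_pos (inv_pos.2 hAr)]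
  calc (μ.real A)⁻¹ * |∫ y in A, (u y - a) ∂μ| ≤ (μ.real A)⁻¹ * ∫ y in B, |u y - a| ∂μ := by
        gcongr
    _ ≤ (K * (μ.real B)⁻¹) * ∫ y in B, |u y - a| ∂μ := by
        gcongr
        rw [← div_eq_mul_inv, le_div_iff₀ hBr, inv_mul_le_iff₀ hAr]
        linarith
    _ = _ := by ring

/-- The right-hand side of the Poincaré inequality on `B(z, r)`. -/
def poincareRHS (μ : MeasureTheory.Measure P) (g : P → ℝ≥0∞) (p cPI lam : ℝ) (z : P) (r : ℝ) :
    ℝ≥0∞ :=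
  ENNReal.ofReal (cPI * (2 * r)) *
    ((μ (ball z (lam * r)))⁻¹ * ∫⁻ y in ball z (lam * r), g y ^ p ∂μ) ^ (1 / p)

/-- The sum of the Poincaré bounds over the balls `B(z, 2⁻ᵏ r)`. -/
def chainSum (μ : MeasureTheory.Measure P) (g : P → ℝ≥0∞) (p cPI lam : ℝ) (z : P) (r : ℝ) :
    ℝ≥0∞ :=
  ∑' k : ℕ, poincareRHS μ g p cPI lam z (r * (1 / 2) ^ k)

/-- The oscillation of `u` between two Lebesgue points is bounded by their chain sums: telescope
the averages over `closedBall z (2 δ 2⁻ᵏ)` at each point and compare the two largest balls inside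
`B(x, 4δ)`. -/
lemma edist_le_chainSum [BorelSpace P]
    (hball : ∀ (x : P) (r : ℝ), 0 < r → 0 < μ (ball x r) ∧ μ (ball x r) < ⊤)
    {s c : ℝ} (hc : 0 < c) (hdim : ∀ (x y : P) (r R : ℝ), 0 < r → r ≤ R → y ∈ ball x R →
      c * (r / R) ^ s * μ.real (ball x R) ≤ μ.real (ball y r))
    {p cPI lam : ℝ} (hPI : PoincareInequality μ p cPI lam)
    {u : P → ℝ} (hu : Measurable u) {b : ℝ} (hb : ∀ x, |u x| ≤ b)
    {g : P → ℝ≥0∞} (hg : IsUpperGradient (fun y => (u y : EReal)) g) {x y : P}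
    (hx : ∀ r : ℝ, 0 < r →
      Tendsto (fun k : ℕ => ⨍ w in closedBall x (r * (1 / 2) ^ k), u w ∂μ) atTop (𝓝 (u x)))
    (hy : ∀ r : ℝ, 0 < r →
      Tendsto (fun k : ℕ => ⨍ w in closedBall y (r * (1 / 2) ^ k), u w ∂μ) atTop (𝓝 (u y)))
    {δ : ℝ} (hδ : 0 < δ) (hxy : dist x y ≤ δ) :
    edist (u x) (u y) ≤ ENNReal.ofReal (4 * (c * (1 / 4) ^ s)⁻¹) *
      (chainSum μ g p cPI lam x (4 * δ) + chainSum μ g p cPI lam y (4 * δ)) := by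
  set K : ℝ := (c * (1 / 4) ^ s)⁻¹ with hK
  have hK0 : 0 < K := by positivity
  have hloc : LocallyIntegrable u μ := fun x =>
    ⟨ball x 1, ball_mem_nhds x one_pos, integrableOn_ball_of_bounded hball hu hb x 1 one_pos⟩
  -- Any closed ball of radius at least `ρ / 4` centred in and contained in `B(z, ρ)` is comparable.
  have comp : ∀ (z w : P) (ρ t : ℝ), 0 < ρ → ρ / 4 ≤ t → w ∈ ball z ρ →
      closedBall w t ⊆ ball z ρ →
      edist (⨍ q in closedBall w t, u q ∂μ) (⨍ q in ball z ρ, u q ∂μ) ≤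
        ENNReal.ofReal K * poincareRHS μ g p cPI lam z ρ := by
    intro z w ρ t hρ ht hw hsub
    have ht0 : 0 < t := by linarith
    have h1 := hdim z w (ρ / 4) ρ (by linarith) (by linarith) hw
    have e1 : ρ / 4 / ρ = 1 / 4 := by field_simp
    rw [e1] at h1
    have hc' : 0 < c * (1 / 4 : ℝ) ^ s := by positivity
    have htop : μ (closedBall w t) ≠ ⊤ :=
      ne_top_of_le_ne_top (hball z ρ hρ).2.ne (measure_mono hsub)
    have h2 : μ.real (ball w (ρ / 4)) ≤ μ.real (closedBall w t) :=
      measureReal_mono (ball_subset_closedBall.trans (closedBall_subset_closedBall ht)) htop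
    have h3 : μ.real (ball z ρ) ≤ K * μ.real (closedBall w t) := by
      rw [hK, inv_mul_eq_div, le_div_iff₀ hc']; linarith
    have h4 := abs_average_sub_le hsub
      ((hball w t ht0).1.trans_le (measure_mono ball_subset_closedBall)) (hball z ρ hρ).2.ne
      (integrableOn_ball_of_bounded hball hu hb z ρ hρ) h3 (⨍ q in ball z ρ, u q ∂μ)
    rw [edist_dist, Real.dist_eq]
    refine (ENNReal.ofReal_le_ofReal h4).trans ?_
    rw [ENNReal.ofReal_mul hK0.le]
    gcongr
    exact hPI z ρ hρ u hloc g hg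
  have single : ∀ z : P,
      poincareRHS μ g p cPI lam z (4 * δ) ≤ chainSum μ g p cPI lam z (4 * δ) := by
    intro z
    have := ENNReal.le_tsum (f := fun k : ℕ => poincareRHS μ g p cPI lam z (4 * δ * (1 / 2) ^ k)) 0
    simpa [chainSum] using this
  have tele : ∀ z : P, (∀ r : ℝ, 0 < r →
      Tendsto (fun k : ℕ => ⨍ w in closedBall z (r * (1 / 2) ^ k), u w ∂μ) atTop (𝓝 (u z))) →
      edist (⨍ q in closedBall z (2 * δ), u q ∂μ) (u z) ≤
        ENNReal.ofReal (2 * K) * chainSum μ g p cPI lam z (4 * δ) := by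
    intro z hz
    have h := edist_le_tsum_of_edist_le_of_tendsto₀
      (f := fun k : ℕ => ⨍ w in closedBall z (2 * δ * (1 / 2) ^ k), u w ∂μ)
      (fun k : ℕ => ENNReal.ofReal (2 * K) * poincareRHS μ g p cPI lam z (4 * δ * (1 / 2) ^ k))
      (fun k => ?_) (hz (2 * δ) (by positivity))
    · rw [ENNReal.tsum_mul_left] at h
      simpa [chainSum] using h
    · have hk : (0 : ℝ) < (1 / 2) ^ k := by positivity
      have hρ : 0 < 4 * δ * (1 / 2) ^ k := by positivity
      have i1 := comp z z (4 * δ * (1 / 2) ^ k) (2 * δ * (1 / 2) ^ k) hρ (by nlinarith)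
        (mem_ball_self hρ) (closedBall_subset_ball (by nlinarith))
      have i2 := comp z z (4 * δ * (1 / 2) ^ k) (2 * δ * (1 / 2) ^ (k + 1)) hρ
        (by rw [pow_succ]; nlinarith)
        (mem_ball_self hρ) (closedBall_subset_ball (by rw [pow_succ]; nlinarith))
      refine (edist_triangle_right _ _ _).trans ((add_le_add i1 i2).trans (le_of_eq ?_))
      rw [ENNReal.ofReal_mul (by norm_num), ENNReal.ofReal_ofNat]
      ring
  have hxx := comp x x (4 * δ) (2 * δ) (by linarith) (by linarith) (mem_ball_self (by linarith))
    (closedBall_subset_ball (by linarith))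
  have hyx := comp x y (4 * δ) (2 * δ) (by linarith) (by linarith)
    (mem_ball'.2 (by linarith)) (fun w hw => by
      have h1 := mem_closedBall.1 hw
      have h2 := dist_triangle w y x
      rw [dist_comm y x] at h2
      exact mem_ball.2 (by linarith))
  have htri : edist (u x) (u y) ≤
      edist (⨍ q in closedBall x (2 * δ), u q ∂μ) (u x) +
      (edist (⨍ q in closedBall x (2 * δ), u q ∂μ) (⨍ q in ball x (4 * δ), u q ∂μ) +
      edist (⨍ q in closedBall y (2 * δ), u q ∂μ) (⨍ q in ball x (4 * δ), u q ∂μ)) +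
      edist (⨍ q in closedBall y (2 * δ), u q ∂μ) (u y) := by
    refine (edist_triangle _ _ _).trans (add_le_add ((edist_triangle_left _ _
      (⨍ q in closedBall x (2 * δ), u q ∂μ)).trans (add_le_add le_rfl ?_)) le_rfl)
    exact edist_triangle_right _ _ _
  refine htri.trans ((add_le_add (add_le_add (tele x hx) (add_le_add hxx hyx)) (tele y hy)).trans ?_)
  have hs := single x
  have e2 : ENNReal.ofReal (2 * K) = 2 * ENNReal.ofReal K := by
    rw [ENNReal.ofReal_mul (by norm_num), ENNReal.ofReal_ofNat]
  have e4 : ENNReal.ofReal (4 * K) = 4 * ENNReal.ofReal K := by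
    rw [ENNReal.ofReal_mul (by norm_num), ENNReal.ofReal_ofNat]
  rw [e2, e4]
  generalize chainSum μ g p cPI lam x (4 * δ) = S at *
  generalize chainSum μ g p cPI lam y (4 * δ) = T at *
  generalize ENNReal.ofReal K = κ at *
  calc _ ≤ 2 * κ * S + (κ * S + κ * S) + 4 * κ * T := by gcongr; norm_num
    _ = _ := by ring

/-! ### The continuous representative -/

/-- The truncation of an extended real to `[-k, k]`. -/
def truncAt (k : ℕ) (z : EReal) : ℝ := (max (min z ((k : ℝ) : EReal)) ((-(k : ℝ) : ℝ) : EReal)).toReal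

lemma truncAt_coe (k : ℕ) (r : ℝ) : truncAt k (r : EReal) = max (min r k) (-(k : ℝ)) := by
  rw [truncAt, ← EReal.coe_strictMono.monotone.map_min, ← EReal.coe_strictMono.monotone.map_max,
    EReal.toReal_coe]

lemma truncAt_top (k : ℕ) : truncAt k ⊤ = k := by
  have h : -(k : ℝ) ≤ k := by linarith [Nat.cast_nonneg (α := ℝ) k]
  rw [truncAt, min_eq_right le_top, max_eq_left (EReal.coe_le_coe_iff.2 h), EReal.toReal_coe]

lemma truncAt_bot (k : ℕ) : truncAt k ⊥ = -k := by
  rw [truncAt, min_eq_left bot_le, max_eq_right bot_le, EReal.toReal_coe]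

lemma measurable_truncAt (k : ℕ) : Measurable (truncAt k) :=
  ((measurable_id.min measurable_const).max measurable_const).ereal_toReal

lemma abs_truncAt_le (k : ℕ) (z : EReal) : |truncAt k z| ≤ k := by
  have h := Nat.cast_nonneg (α := ℝ) k
  induction z with
  | bot => rw [truncAt_bot, abs_neg, abs_of_nonneg h]
  | top => rw [truncAt_top, abs_of_nonneg h]
  | coe r =>
    rw [truncAt_coe, abs_le]
    exact ⟨le_max_right _ _, max_le (min_le_right _ _) (by linarith)⟩

lemma truncAt_sub_le (k : ℕ) (a b : EReal) :
    ((truncAt k a : EReal) - (truncAt k b : EReal)).abs ≤ (a - b).abs := by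
  induction a with
  | bot => induction b <;> simp
  | top => induction b <;> simp
  | coe r =>
    induction b with
    | bot => simp
    | top => simp
    | coe t =>
      rw [← EReal.coe_sub, ← EReal.coe_sub, EReal.abs_def, EReal.abs_def, truncAt_coe, truncAt_coe]
      refine ENNReal.ofReal_le_ofReal ?_
      refine (abs_max_sub_max_le_abs _ _ _).trans ?_
      simpa using abs_min_sub_min_le_max r (k : ℝ) t (k : ℝ)

lemma IsUpperGradient.truncAt {u : P → EReal} {g : P → ℝ≥0∞} (h : IsUpperGradient u g) (k : ℕ) :
    IsUpperGradient (fun x => (truncAt k (u x) : EReal)) g :=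
  ⟨h.1, fun γ => (truncAt_sub_le k _ _).trans (h.2 γ)⟩

/-- If the chain sums are locally uniformly small for small radii, then `u` agrees almost everywhere
with a continuous function, whose modulus of continuity on a dense set is controlled by them. -/
lemma exists_continuous_ae_eq [BorelSpace P] [SigmaFinite μ]
    (hball : ∀ (x : P) (r : ℝ), 0 < r → 0 < μ (ball x r) ∧ μ (ball x r) < ⊤)
    {s c : ℝ} (hc : 0 < c) (hdim : ∀ (x y : P) (r R : ℝ), 0 < r → r ≤ R → y ∈ ball x R →
      c * (r / R) ^ s * μ.real (ball x R) ≤ μ.real (ball y r))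
    {p cPI lam : ℝ} (hPI : PoincareInequality μ p cPI lam)
    {u : P → EReal} (hu : Measurable u) (hfin : ∀ᵐ x ∂μ, (u x).abs ≠ ⊤)
    {g : P → ℝ≥0∞} (hg : IsUpperGradient u g)
    (hbound : ∀ x₀ : P, ∃ r₁ > 0, ∃ β : ℕ → ℝ≥0∞, Tendsto β atTop (𝓝 0) ∧
      ∀ z ∈ ball x₀ 1, ∀ n : ℕ, chainSum μ g p cPI lam z (r₁ * (1 / 2) ^ n) ≤ β n) :
    ∃ (v : P → ℝ) (D : Set P), Continuous v ∧ (∀ᵐ x ∂μ, u x = (v x : EReal)) ∧ Dense D ∧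
      ∀ x ∈ D, ∀ y ∈ D, ∀ δ : ℝ, 0 < δ → dist x y ≤ δ →
        edist (v x) (v y) ≤ ENNReal.ofReal (4 * (c * (1 / 4) ^ s)⁻¹) *
          (chainSum μ g p cPI lam x (4 * δ) + chainSum μ g p cPI lam y (4 * δ)) := by
  set D : Set P := {z | (u z).abs ≠ ⊤ ∧ ∀ k : ℕ, ∀ r : ℝ, 0 < r →
      Tendsto (fun j : ℕ => ⨍ y in closedBall z (r * (1 / 2) ^ j), truncAt k (u y) ∂μ) atTop
        (𝓝 (truncAt k (u z)))} with hD
  have hDae : ∀ᵐ z ∂μ, z ∈ D := by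
    have h2 : ∀ᵐ z ∂μ, ∀ k : ℕ, ∀ r : ℝ, 0 < r →
      Tendsto (fun j : ℕ => ⨍ y in closedBall z (r * (1 / 2) ^ j), truncAt k (u y) ∂μ) atTop
        (𝓝 (truncAt k (u z))) := ae_all_iff.2 fun k =>
      ae_tendsto_average_closedBall hball hc hdim ((measurable_truncAt k).comp hu)
        (fun x => abs_truncAt_le k (u x))
    filter_upwards [hfin, h2] with z h1 h2 using ⟨h1, h2⟩
  have hDdense : Dense D := by
    rw [Metric.dense_iff]
    intro x r hr
    by_contra hne
    rw [not_nonempty_iff_eq_empty] at hne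
    have hsub : ball x r ⊆ {y | ¬ y ∈ D} := by
      intro y hy hyD
      have h3 : y ∈ ball x r ∩ D := ⟨hy, hyD⟩
      rw [hne] at h3
      exact h3
    have : μ (ball x r) = 0 := measure_mono_null hsub (ae_iff.1 hDae)
    exact (hball x r hr).1.ne' this
  set f : P → ℝ := fun x => (u x).toReal with hf
  have huf : ∀ x ∈ D, u x = (f x : EReal) := by
    intro x hx
    have h1 : (u x).abs ≠ ⊤ := hx.1
    refine (EReal.coe_toReal ?_ ?_).symm
    · intro h; simp [h] at h1
    · intro h; simp [h] at h1
  have hosc : ∀ x ∈ D, ∀ y ∈ D, ∀ δ : ℝ, 0 < δ → dist x y ≤ δ →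
        edist (f x) (f y) ≤ ENNReal.ofReal (4 * (c * (1 / 4) ^ s)⁻¹) *
          (chainSum μ g p cPI lam x (4 * δ) + chainSum μ g p cPI lam y (4 * δ)) := by
    intro x hx y hy δ hδ hxy
    obtain ⟨k, hk⟩ := exists_nat_ge (max |f x| |f y|)
    have tr : ∀ w ∈ D, |f w| ≤ k → truncAt k (u w) = f w := by
      intro w hw hwk
      rw [huf w hw, truncAt_coe, min_eq_left (abs_le.1 hwk).2, max_eq_left (abs_le.1 hwk).1]
    have h := edist_le_chainSum hball hc hdim hPI ((measurable_truncAt k).comp hu)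
      (fun x => abs_truncAt_le k (u x)) (hg.truncAt k) (hx.2 k) (hy.2 k) hδ hxy
    simp only [Function.comp_apply] at h
    rwa [tr x hx ((le_max_left _ _).trans hk), tr y hy ((le_max_right _ _).trans hk)] at h
  have hlim : ∀ x₀ : P, ∃ l : ℝ, Tendsto f (𝓝[D] x₀) (𝓝 l) := by
    intro x₀
    have hne : (𝓝[D] x₀).NeBot := mem_closure_iff_nhdsWithin_neBot.1 (hDdense x₀)
    refine cauchy_map_iff_exists_tendsto.1 (EMetric.cauchy_iff.2 ⟨hne.map f |>.ne, fun ε hε => ?_⟩)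
    obtain ⟨r₁, hr₁, β, hβ, hle⟩ := hbound x₀
    have h1 : Tendsto (fun n => ENNReal.ofReal (4 * (c * (1 / 4) ^ s)⁻¹) * (β n + β n)) atTop
        (𝓝 0) := by
      have h2 := ENNReal.Tendsto.const_mul (a := ENNReal.ofReal (4 * (c * (1 / 4) ^ s)⁻¹))
        (hβ.add hβ) (Or.inr ENNReal.ofReal_ne_top)
      rwa [add_zero, mul_zero] at h2
    obtain ⟨n, hn⟩ := (h1.eventually (gt_mem_nhds hε)).exists
    set δ : ℝ := r₁ * (1 / 2) ^ n / 4 with hδ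
    have hδ0 : 0 < δ := by positivity
    have e : 4 * δ = r₁ * (1 / 2) ^ n := by rw [hδ]; ring
    refine ⟨f '' (D ∩ ball x₀ (min (δ / 2) 1)), image_mem_map (inter_mem_nhdsWithin D ?_), ?_⟩
    · exact ball_mem_nhds _ (by positivity)
    · rintro _ ⟨x, ⟨hx, hxb⟩, rfl⟩ _ ⟨y, ⟨hy, hyb⟩, rfl⟩
      have hx' := lt_min_iff.1 (mem_ball.1 hxb)
      have hy' := lt_min_iff.1 (mem_ball.1 hyb)
      have hxy : dist x y ≤ δ := by
        have := dist_triangle_right x y x₀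
        linarith [hx'.1, hy'.1]
      refine (hosc x hx y hy δ hδ0 hxy).trans_lt (lt_of_le_of_lt ?_ hn)
      rw [e]
      gcongr
      · exact hle x hx'.2 n
      · exact hle y hy'.2 n
  have hext : ∀ x ∈ D, extendFrom D f x = f x := by
    intro x hx
    obtain ⟨l, hl⟩ := hlim x
    rw [extendFrom_eq (hDdense x) hl]
    exact tendsto_nhds_unique (hl.mono_left (pure_le_nhdsWithin hx)) (tendsto_pure_nhds f x)
  refine ⟨extendFrom D f, D, continuous_extendFrom hDdense hlim, ?_, hDdense, ?_⟩
  · filter_upwards [hDae] with x hx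
    rw [hext x hx, huf x hx]
  · intro x hx y hy δ hδ hxy
    rw [hext x hx, hext y hy]
    exact hosc x hx y hy δ hδ hxy

/-! ### Decreasing rearrangements -/

lemma abs_coe_ennreal (a : ℝ≥0∞) : (a : EReal).abs = a := by
  induction a with
  | top => simp
  | coe r =>
    rw [EReal.coe_nnreal_eq_coe_real, EReal.abs_def]
    simp

/-- The layer cake formula for functions that may take the value `∞`. -/
lemma lintegral_eq_lintegral_meas_ofReal_lt {α : Type*} [MeasurableSpace α] (ν : Measure α)
    [SFinite ν] {f : α → ℝ≥0∞} (hf : Measurable f) :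
    ∫⁻ x, f x ∂ν = ∫⁻ τ in Ioi (0 : ℝ), ν {x | ENNReal.ofReal τ < f x} := by
  have hset : MeasurableSet {q : α × ℝ | ENNReal.ofReal q.2 < f q.1} :=
    measurableSet_lt (ENNReal.measurable_ofReal.comp measurable_snd) (hf.comp measurable_fst)
  have h1 : ∀ x, f x = ∫⁻ τ in Ioi (0 : ℝ),
      {q : α × ℝ | ENNReal.ofReal q.2 < f q.1}.indicator (fun _ => (1 : ℝ≥0∞)) (x, τ) := by
    intro x
    have e : (fun τ : ℝ => {q : α × ℝ | ENNReal.ofReal q.2 < f q.1}.indicator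
        (fun _ => (1 : ℝ≥0∞)) (x, τ)) = {τ : ℝ | ENNReal.ofReal τ < f x}.indicator 1 := by
      ext τ
      by_cases h : ENNReal.ofReal τ < f x <;> simp [h]
    have hm : MeasurableSet {τ : ℝ | ENNReal.ofReal τ < f x} :=
      measurableSet_lt ENNReal.measurable_ofReal measurable_const
    rw [e, lintegral_indicator_one hm, Measure.restrict_apply hm]
    by_cases htop : f x = ⊤
    · simp [htop]
    · have : {τ : ℝ | ENNReal.ofReal τ < f x} ∩ Ioi 0 = Ioo 0 (f x).toReal := by
        ext τ
        constructor
        · rintro ⟨h2, h3⟩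
          exact ⟨h3, (ENNReal.ofReal_lt_iff_lt_toReal (le_of_lt h3) htop).1 h2⟩
        · rintro ⟨h2, h3⟩
          exact ⟨(ENNReal.ofReal_lt_iff_lt_toReal h2.le htop).2 h3, h2⟩
      rw [this, Real.volume_Ioo, sub_zero, ENNReal.ofReal_toReal htop]
  calc ∫⁻ x, f x ∂ν = ∫⁻ x, (∫⁻ τ in Ioi (0 : ℝ),
      {q : α × ℝ | ENNReal.ofReal q.2 < f q.1}.indicator (fun _ => (1 : ℝ≥0∞)) (x, τ)) ∂ν :=
        lintegral_congr h1
    _ = ∫⁻ τ in Ioi (0 : ℝ), ∫⁻ x,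
      {q : α × ℝ | ENNReal.ofReal q.2 < f q.1}.indicator (fun _ => (1 : ℝ≥0∞)) (x, τ) ∂ν :=
        lintegral_lintegral_swap (f := fun x τ =>
          {q : α × ℝ | ENNReal.ofReal q.2 < f q.1}.indicator (fun _ => (1 : ℝ≥0∞)) (x, τ))
          (measurable_const.indicator hset).aemeasurable
    _ = _ := by
        refine lintegral_congr fun τ => ?_
        have e : (fun x : α => {q : α × ℝ | ENNReal.ofReal q.2 < f q.1}.indicator
            (fun _ => (1 : ℝ≥0∞)) (x, τ)) = {x : α | ENNReal.ofReal τ < f x}.indicator 1 := by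
          ext x
          by_cases h : ENNReal.ofReal τ < f x <;> simp [h]
        rw [e, lintegral_indicator_one (measurableSet_lt measurable_const hf)]

lemma lintegral_le_of_meas_lt_le {α β : Type*} [MeasurableSpace α] [MeasurableSpace β]
    (ν₁ : Measure α) (ν₂ : Measure β) [SFinite ν₁] [SFinite ν₂] {f : α → ℝ≥0∞} {h : β → ℝ≥0∞}
    (hf : Measurable f) (hh : Measurable h)
    (H : ∀ τ : ℝ≥0∞, τ ≠ ⊤ → ν₁ {x | τ < f x} ≤ ν₂ {y | τ < h y}) :
    ∫⁻ x, f x ∂ν₁ ≤ ∫⁻ y, h y ∂ν₂ := by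
  rw [lintegral_eq_lintegral_meas_ofReal_lt ν₁ hf, lintegral_eq_lintegral_meas_ofReal_lt ν₂ hh]
  exact lintegral_mono fun τ => H _ ENNReal.ofReal_ne_top

lemma decRearr_antitone (μ : MeasureTheory.Measure P) (f : P → EReal) :
    Antitone (decRearr μ f) := fun _ _ hab =>
  sInf_le_sInf fun _ hτ => le_trans hτ (ENNReal.ofReal_le_ofReal hab)

/-- Because the infimum defining the rearrangement is attained, `μ {|f| > σ} > t` forces
`f* t > σ`. -/
lemma lt_decRearr {f : P → EReal} {t : ℝ} {σ : ℝ≥0∞}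
    (h : ENNReal.ofReal t < μ {x | σ < (f x).abs}) : σ < decRearr μ f t := by
  by_contra hcon
  rw [not_lt] at hcon
  set S : Set ℝ≥0∞ := {τ : ℝ≥0∞ | μ {x | τ < (f x).abs} ≤ ENNReal.ofReal t} with hS
  have hne : S.Nonempty := ⟨⊤, by simp [hS]⟩
  obtain ⟨w, hwanti, hwlim, hwS⟩ := exists_seq_tendsto_sInf hne (OrderBot.bddBelow S)
  have hU : {x | sInf S < (f x).abs} = ⋃ n, {x | w n < (f x).abs} := by
    ext x
    simp only [mem_ofPred_eq, mem_iUnion]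
    constructor
    · intro hx
      exact (hwlim.eventually (gt_mem_nhds hx)).exists
    · rintro ⟨n, hn⟩
      exact (sInf_le (hwS n)).trans_lt hn
  have hdir : Directed (· ⊆ ·) fun n => {x | w n < (f x).abs} := by
    refine Monotone.directed_le (f := fun n => {x | w n < (f x).abs}) fun a b hab x hx => ?_
    exact (hwanti hab).trans_lt hx
  have hle : μ {x | sInf S < (f x).abs} ≤ ENNReal.ofReal t := by
    rw [hU, hdir.measure_iUnion]
    exact iSup_le fun n => hwS n
  have : μ {x | σ < (f x).abs} ≤ ENNReal.ofReal t :=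
    (measure_mono fun x hx => lt_of_le_of_lt hcon hx).trans hle
  exact absurd h (not_lt.2 this)

/-- Hardy–Littlewood: an average over a set of measure at least `m` is at most the average of the
rearrangement over `(0, m)`. -/
lemma average_le_rearr {B E : Set P} (hE : MeasurableSet E) (hEB : E ⊆ B)
    {g : P → ℝ≥0∞} (hg : Measurable g) {m : ℝ} (hm : 0 < m) (hmE : ENNReal.ofReal m ≤ μ E)
    (hEtop : μ E ≠ ⊤) {p : ℝ} (hp : 0 < p) :
    (μ E)⁻¹ * ∫⁻ y in E, g y ^ p ∂μ ≤
      (ENNReal.ofReal m)⁻¹ *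
        ∫⁻ t in Ioo 0 m, decRearr μ (B.indicator fun x => (g x : EReal)) t ^ p := by
  set h : ℝ → ℝ≥0∞ := decRearr μ (B.indicator fun x => (g x : EReal)) with hh
  have hhm : Measurable h := (decRearr_antitone μ _).measurable
  have hM0 : ENNReal.ofReal m ≠ 0 := by simpa using hm
  have hE0 : μ E ≠ 0 := fun h0 => hM0 (by simpa [h0] using hmE)
  set K : ℝ≥0∞ := μ E / ENNReal.ofReal m with hK
  have hK1 : 1 ≤ K := by
    rw [hK, ENNReal.le_div_iff_mul_le (Or.inl hM0) (Or.inl ENNReal.ofReal_ne_top), one_mul]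
    exact hmE
  have hKm : K * ENNReal.ofReal m = μ E := ENNReal.div_mul_cancel hM0 ENNReal.ofReal_ne_top
  have hKtop : K ≠ ⊤ := ENNReal.div_ne_top hEtop hM0
  have : IsFiniteMeasure (μ.restrict E) := ⟨by simpa using hEtop.lt_top⟩
  have main : ∫⁻ y in E, g y ^ p ∂μ ≤ ∫⁻ t, h t ^ p ∂(K • volume.restrict (Ioo 0 m)) := by
    have : SFinite (K • (volume.restrict (Ioo 0 m) : Measure ℝ)) := by
      rw [← ENNReal.coe_toNNReal hKtop]
      exact inferInstanceAs (SFinite (K.toNNReal • (volume.restrict (Ioo 0 m) : Measure ℝ)))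
    refine lintegral_le_of_meas_lt_le _ _ (hg.pow_const p) (hhm.pow_const p) fun τ hτ => ?_
    set σ : ℝ≥0∞ := τ ^ (1 / p) with hσ
    have hiff : ∀ a : ℝ≥0∞, τ < a ^ p ↔ σ < a := by
      intro a
      rw [hσ, one_div, ENNReal.rpow_inv_lt_iff hp]
    simp only [hiff]
    rw [Measure.smul_apply, smul_eq_mul, Measure.restrict_apply' measurableSet_Ioo,
      Measure.restrict_apply' hE]
    set b : ℝ≥0∞ := μ {x | σ < ((B.indicator (fun x => (g x : EReal))) x).abs} with hb
    have hab : μ ({x | σ < g x} ∩ E) ≤ b := by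
      refine measure_mono fun x hx => ?_
      have hx1 : σ < g x := hx.1
      simpa [hEB hx.2, abs_coe_ennreal] using hx1
    have hsub : ∀ q : ℝ, q ≤ m → ENNReal.ofReal q ≤ b →
        ENNReal.ofReal q ≤ volume ({t | σ < h t} ∩ Ioo 0 m) := by
      intro q hqm hqb
      have : Ioo 0 q ⊆ {t | σ < h t} ∩ Ioo 0 m := by
        intro t ht
        refine ⟨lt_decRearr (lt_of_lt_of_le ?_ hqb), ht.1, ht.2.trans_le hqm⟩
        exact (ENNReal.ofReal_lt_ofReal_iff (ht.1.trans ht.2)).2 ht.2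
      simpa using measure_mono (μ := (volume : Measure ℝ)) this
    rcases le_total (ENNReal.ofReal m) b with hmb | hbm
    · calc μ ({x | σ < g x} ∩ E) ≤ μ E := measure_mono inter_subset_right
        _ = K * ENNReal.ofReal m := hKm.symm
        _ ≤ _ := by gcongr; exact hsub m le_rfl hmb
    · have hbtop : b ≠ ⊤ := ne_top_of_le_ne_top ENNReal.ofReal_ne_top hbm
      have h3 := hsub b.toReal (ENNReal.toReal_le_of_le_ofReal hm.le hbm)
        (ENNReal.ofReal_toReal hbtop).le
      rw [ENNReal.ofReal_toReal hbtop] at h3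
      calc μ ({x | σ < g x} ∩ E) ≤ 1 * b := by rwa [one_mul]
        _ ≤ _ := by gcongr
  rw [lintegral_smul_measure, smul_eq_mul] at main
  calc (μ E)⁻¹ * ∫⁻ y in E, g y ^ p ∂μ ≤ (μ E)⁻¹ * (K * ∫⁻ t in Ioo 0 m, h t ^ p) := by gcongr
    _ = ((μ E)⁻¹ * μ E) * ((ENNReal.ofReal m)⁻¹ * ∫⁻ t in Ioo 0 m, h t ^ p) := by
        rw [hK, ENNReal.div_eq_inv_mul]; ring
    _ = _ := by rw [ENNReal.inv_mul_cancel hE0 hEtop, one_mul]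

/-! ### Uniform bounds for chain sums -/

lemma ofReal_mul_inv_mul_rpow {a b p : ℝ} (ha : 0 ≤ a) (hb : 0 < b) (hp : 0 < p) (I : ℝ≥0∞) :
    ENNReal.ofReal a * ((ENNReal.ofReal b)⁻¹ * I) ^ (1 / p) =
      ENNReal.ofReal (a * b ^ (-(1 / p))) * I ^ (1 / p) := by
  rw [ENNReal.mul_rpow_of_nonneg _ _ (by positivity), ENNReal.inv_rpow,
    ENNReal.ofReal_rpow_of_pos hb, ENNReal.ofReal_mul ha, Real.rpow_neg hb.le,
    ENNReal.ofReal_inv_of_pos (by positivity), mul_assoc]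

/-- Lower mass bound for the balls `B(z, λρ)` contained in a fixed ball `B(x₀, 2)`. -/
lemma ball_mass_lower
    {s c : ℝ} (hdim : ∀ (x y : P) (r R : ℝ), 0 < r → r ≤ R → y ∈ ball x R →
      c * (r / R) ^ s * μ.real (ball x R) ≤ μ.real (ball y r))
    {lam : ℝ} (hlam : 1 ≤ lam) (x₀ z : P) (hz : z ∈ ball x₀ 1) {ρ : ℝ} (hρ : 0 < ρ)
    (hρ1 : lam * ρ ≤ 1) :
    ball z (lam * ρ) ⊆ ball x₀ 2 ∧
      ENNReal.ofReal (c * (lam / 2) ^ s * μ.real (ball x₀ 2) * ρ ^ s) ≤ μ (ball z (lam * ρ)) := by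
  have hlam0 : 0 < lam := by linarith
  have hz' := mem_ball.1 hz
  constructor
  · exact ball_subset_ball' (by linarith)
  · have h := hdim x₀ z (lam * ρ) 2 (by positivity) (by linarith) (mem_ball.2 (by linarith))
    have e : (lam * ρ / 2) ^ s = (lam / 2) ^ s * ρ ^ s := by
      rw [← Real.mul_rpow (by positivity) hρ.le]; congr 1; ring
    rw [e] at h
    refine ENNReal.ofReal_le_of_le_toReal (le_trans (le_of_eq ?_) h)
    ring

/-- The Poincaré bound on `B(z, ρ)` in terms of any bound `I / (A ρ ^ s)` for the average of
`g ^ p`; the factor `ρ ^ (1 - s / p)` decides between the three regimes of `p` and `s`. -/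
lemma poincareRHS_le_of_average_le {s p cPI lam A ρ : ℝ} (hA : 0 < A) (hρ : 0 < ρ) (hp : 0 < p)
    (hcPI : 0 < cPI) {g : P → ℝ≥0∞} {z : P} {I : ℝ≥0∞}
    (h : (μ (ball z (lam * ρ)))⁻¹ * ∫⁻ y in ball z (lam * ρ), g y ^ p ∂μ ≤
      (ENNReal.ofReal (A * ρ ^ s))⁻¹ * I) :
    poincareRHS μ g p cPI lam z ρ ≤
      ENNReal.ofReal (2 * cPI * A ^ (-(1 / p)) * ρ ^ (1 - s / p)) * I ^ (1 / p) := by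
  have hρs : 0 < A * ρ ^ s := by positivity
  calc poincareRHS μ g p cPI lam z ρ
      ≤ ENNReal.ofReal (cPI * (2 * ρ)) * ((ENNReal.ofReal (A * ρ ^ s))⁻¹ * I) ^ (1 / p) := by
        rw [poincareRHS]
        gcongr
    _ = ENNReal.ofReal (cPI * (2 * ρ) * (A * ρ ^ s) ^ (-(1 / p))) * I ^ (1 / p) :=
        ofReal_mul_inv_mul_rpow (by positivity) hρs hp I
    _ = _ := by
        congr 2
        rw [Real.mul_rpow hA.le (by positivity), ← Real.rpow_mul hρ.le, Real.rpow_sub hρ,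
          Real.rpow_one, show s * -(1 / p) = -(s / p) by ring, Real.rpow_neg hρ.le]
        field_simp

/-- A summable bound for the Poincaré terms, uniform in the centre, makes the chain sums tend to
zero uniformly: the tails of the series serve as the modulus. -/
lemma chain_bound_of_summable {g : P → ℝ≥0∞} {p cPI lam : ℝ} {x₀ : P} {r₁ : ℝ} (hr₁ : 0 < r₁)
    {F : ℕ → ℝ≥0∞} (hF : ∑' k, F k ≠ ⊤)
    (h : ∀ z ∈ ball x₀ 1, ∀ k : ℕ, poincareRHS μ g p cPI lam z (r₁ * (1 / 2) ^ k) ≤ F k) :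
    ∃ r₁ > 0, ∃ β : ℕ → ℝ≥0∞, Tendsto β atTop (𝓝 0) ∧
      ∀ z ∈ ball x₀ 1, ∀ n : ℕ, chainSum μ g p cPI lam z (r₁ * (1 / 2) ^ n) ≤ β n := by
  refine ⟨r₁, hr₁, fun n => ∑' k, F (k + n), ENNReal.tendsto_sum_nat_add F hF, fun z hz n => ?_⟩
  refine ENNReal.tsum_le_tsum fun k => ?_
  have := h z hz (k + n)
  rwa [pow_add, mul_comm ((1 / 2 : ℝ) ^ k), ← mul_assoc] at this

/-- Reduction of the chain bound to a one-dimensional series involving the rearrangement of the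
upper gradient on `B(x₀, 2)`. -/
lemma chain_bound_of_rearr_summable [BorelSpace P]
    (hball : ∀ (x : P) (r : ℝ), 0 < r → 0 < μ (ball x r) ∧ μ (ball x r) < ⊤)
    {s c : ℝ} (hc : 0 < c) (hdim : ∀ (x y : P) (r R : ℝ), 0 < r → r ≤ R → y ∈ ball x R →
      c * (r / R) ^ s * μ.real (ball x R) ≤ μ.real (ball y r))
    {p cPI lam : ℝ} (hp : 0 < p) (hcPI : 0 < cPI) (hlam : 1 ≤ lam)
    {g : P → ℝ≥0∞} (hg : Measurable g) (x₀ : P)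
    (h1D : ∀ m : ℝ, 0 < m → m ≤ μ.real (ball x₀ 2) →
      ∑' k : ℕ, ENNReal.ofReal (((1 / 2 : ℝ) ^ (1 - s / p)) ^ k) *
        (∫⁻ t in Ioo 0 (m * ((1 / 2 : ℝ) ^ s) ^ k),
          decRearr μ ((ball x₀ 2).indicator fun x => (g x : EReal)) t ^ p) ^ (1 / p) ≠ ⊤) :
    ∃ r₁ > 0, ∃ β : ℕ → ℝ≥0∞, Tendsto β atTop (𝓝 0) ∧
      ∀ z ∈ ball x₀ 1, ∀ n : ℕ, chainSum μ g p cPI lam z (r₁ * (1 / 2) ^ n) ≤ β n := by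
  have hlam0 : 0 < lam := by linarith
  have hM : 0 < μ.real (ball x₀ 2) :=
    ENNReal.toReal_pos (hball x₀ 2 two_pos).1.ne' (hball x₀ 2 two_pos).2.ne
  set A : ℝ := c * (lam / 2) ^ s * μ.real (ball x₀ 2) with hA
  have hA0 : 0 < A := by positivity
  set r₁ : ℝ := 1 / lam with hr
  have hr0 : 0 < r₁ := by positivity
  have hlr : lam * r₁ = 1 := by rw [hr]; field_simp
  have hpow : ∀ (e : ℝ) (k : ℕ), (r₁ * (1 / 2) ^ k) ^ e = r₁ ^ e * ((1 / 2 : ℝ) ^ e) ^ k := by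
    intro e k
    rw [Real.mul_rpow hr0.le (by positivity), ← Real.rpow_natCast, ← Real.rpow_natCast,
      ← Real.rpow_mul (by norm_num), ← Real.rpow_mul (by norm_num), mul_comm e]
  have hm0 : A * r₁ ^ s ≤ μ.real (ball x₀ 2) := by
    obtain ⟨i1, i2⟩ := ball_mass_lower hdim hlam x₀ x₀ (mem_ball_self one_pos) hr0 hlr.le
    exact (ENNReal.ofReal_le_iff_le_toReal (hball x₀ 2 two_pos).2.ne).1
      (i2.trans (measure_mono i1))
  have hsum := h1D (A * r₁ ^ s) (by positivity) hm0
  set C : ℝ := 2 * cPI * A ^ (-(1 / p)) * r₁ ^ (1 - s / p) with hC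
  refine chain_bound_of_summable hr0
    (F := fun k => ENNReal.ofReal C * (ENNReal.ofReal (((1 / 2 : ℝ) ^ (1 - s / p)) ^ k) *
        (∫⁻ t in Ioo 0 (A * r₁ ^ s * ((1 / 2 : ℝ) ^ s) ^ k),
          decRearr μ ((ball x₀ 2).indicator fun x => (g x : EReal)) t ^ p) ^ (1 / p))) ?_ ?_
  · rw [ENNReal.tsum_mul_left]
    exact ENNReal.mul_ne_top ENNReal.ofReal_ne_top hsum
  · intro z hz k
    have hk : (0 : ℝ) < (1 / 2) ^ k := by positivity
    have hk1 : (1 / 2 : ℝ) ^ k ≤ 1 := pow_le_one₀ (by norm_num) (by norm_num)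
    have hρ : 0 < r₁ * (1 / 2) ^ k := by positivity
    obtain ⟨i1, i2⟩ := ball_mass_lower hdim hlam x₀ z hz hρ
      (by rw [← mul_assoc, hlr, one_mul]; exact hk1)
    rw [← hA] at i2
    have i3 := average_le_rearr measurableSet_ball i1 hg (by positivity) i2
      (hball z _ (by positivity)).2.ne hp
    refine (poincareRHS_le_of_average_le hA0 hρ hp hcPI i3).trans (le_of_eq ?_)
    rw [hpow, hpow, hC, ← mul_assoc (ENNReal.ofReal _), ← ENNReal.ofReal_mul (by positivity)]
    ring_nf

/-- In the super-critical case `p > s` the chain sums decay like `r ^ (1 - s / p)`. -/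
lemma chainSum_le_of_lt
    (hball : ∀ (x : P) (r : ℝ), 0 < r → 0 < μ (ball x r) ∧ μ (ball x r) < ⊤)
    {s c : ℝ} (hc : 0 < c) (hdim : ∀ (x y : P) (r R : ℝ), 0 < r → r ≤ R → y ∈ ball x R →
      c * (r / R) ^ s * μ.real (ball x R) ≤ μ.real (ball y r))
    {p cPI lam : ℝ} (hp : 0 < p) (hsp : s < p) (hcPI : 0 < cPI) (hlam : 1 ≤ lam)
    {g : P → ℝ≥0∞} (x₀ : P) (hfin : ∫⁻ y in ball x₀ 2, g y ^ p ∂μ ≠ ⊤) :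
    ∃ C : ℝ, 0 ≤ C ∧ ∀ z ∈ ball x₀ 1, ∀ r : ℝ, 0 < r → lam * r ≤ 1 →
      chainSum μ g p cPI lam z r ≤ ENNReal.ofReal (C * r ^ (1 - s / p)) := by
  have hlam0 : 0 < lam := by linarith
  have hM : 0 < μ.real (ball x₀ 2) :=
    ENNReal.toReal_pos (hball x₀ 2 two_pos).1.ne' (hball x₀ 2 two_pos).2.ne
  set A : ℝ := c * (lam / 2) ^ s * μ.real (ball x₀ 2) with hA
  have hA0 : 0 < A := by positivity
  set θ : ℝ := 1 - s / p with hθ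
  have hθ0 : 0 < θ := by
    have : s / p < 1 := (div_lt_one hp).2 hsp
    linarith
  set J : ℝ≥0∞ := ∫⁻ y in ball x₀ 2, g y ^ p ∂μ with hJ
  set L : ℝ := 2 * cPI * A ^ (-(1 / p)) * (J ^ (1 / p)).toReal with hL
  have hL0 : 0 ≤ L := by positivity
  have hq0 : (0 : ℝ) ≤ (1 / 2) ^ θ := by positivity
  have hq1 : (1 / 2 : ℝ) ^ θ < 1 := Real.rpow_lt_one (by norm_num) (by norm_num) hθ0
  refine ⟨L * (1 - (1 / 2) ^ θ)⁻¹, mul_nonneg hL0 (inv_nonneg.2 (by linarith)), ?_⟩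
  intro z hz r hr hr1
  have hterm : ∀ k : ℕ, poincareRHS μ g p cPI lam z (r * (1 / 2) ^ k) ≤
      ENNReal.ofReal (L * r ^ θ * ((1 / 2 : ℝ) ^ θ) ^ k) := by
    intro k
    have hk : (0 : ℝ) < (1 / 2) ^ k := by positivity
    have hk1 : (1 / 2 : ℝ) ^ k ≤ 1 := pow_le_one₀ (by norm_num) (by norm_num)
    have hρ : 0 < r * (1 / 2) ^ k := by positivity
    obtain ⟨i1, i2⟩ := ball_mass_lower hdim hlam x₀ z hz hρ
      (by rw [← mul_assoc]; nlinarith)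
    have i3 : (μ (ball z (lam * (r * (1 / 2) ^ k))))⁻¹ *
        ∫⁻ y in ball z (lam * (r * (1 / 2) ^ k)), g y ^ p ∂μ ≤
        (ENNReal.ofReal (A * (r * (1 / 2) ^ k) ^ s))⁻¹ * J :=
      mul_le_mul' (ENNReal.inv_le_inv.2 i2) (lintegral_mono_set i1)
    refine (poincareRHS_le_of_average_le hA0 hρ hp hcPI i3).trans (le_of_eq ?_)
    have hJt : J ^ (1 / p) ≠ ⊤ := ENNReal.rpow_ne_top_of_nonneg (by positivity) hfin
    have e : (r * (1 / 2) ^ k) ^ θ = r ^ θ * ((1 / 2 : ℝ) ^ θ) ^ k := by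
      rw [Real.mul_rpow hr.le (by positivity), ← Real.rpow_natCast, ← Real.rpow_natCast,
        ← Real.rpow_mul (by norm_num), ← Real.rpow_mul (by norm_num), mul_comm θ]
    rw [← ENNReal.ofReal_toReal hJt, ← ENNReal.ofReal_mul (by positivity), e, hL]
    ring_nf
  calc chainSum μ g p cPI lam z r
      ≤ ∑' k : ℕ, ENNReal.ofReal (L * r ^ θ * ((1 / 2 : ℝ) ^ θ) ^ k) :=
        ENNReal.tsum_le_tsum hterm
    _ = ENNReal.ofReal (∑' k : ℕ, L * r ^ θ * ((1 / 2 : ℝ) ^ θ) ^ k) :=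
        (ENNReal.ofReal_tsum_of_nonneg (fun k => by positivity)
          ((summable_geometric_of_lt_one hq0 hq1).mul_left _)).symm
    _ = _ := by
        rw [tsum_mul_left, tsum_geometric_of_lt_one hq0 hq1]
        ring_nf

/-! ### One-dimensional series -/

/-- Countable subadditivity of concave powers. -/
lemma rpow_tsum_le_tsum_rpow (f : ℕ → ℝ≥0∞) {r : ℝ} (hr0 : 0 < r) (hr1 : r ≤ 1) :
    (∑' j, f j) ^ r ≤ ∑' j, f j ^ r := by
  have hfin : ∀ n : ℕ, (∑ j ∈ Finset.range n, f j) ^ r ≤ ∑ j ∈ Finset.range n, f j ^ r := by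
    intro n
    induction n with
    | zero => simp [hr0]
    | succ n ih =>
      rw [Finset.sum_range_succ, Finset.sum_range_succ]
      exact (ENNReal.rpow_add_le_add_rpow _ _ hr0.le hr1).trans (add_le_add ih le_rfl)
  have hlim := (ENNReal.continuous_rpow_const (y := r)).tendsto (∑' j, f j) |>.comp
    (ENNReal.tendsto_nat_tsum f)
  exact le_of_tendsto hlim (Eventually.of_forall fun n => (hfin n).trans (ENNReal.sum_le_tsum _))

/-- The series for `p = s = 1`: the number of dyadic intervals `(0, m 2⁻ᵏ)` containing `t` is
controlled by `1 + log (M / t)`. -/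
lemma series_ne_top_of_zygmund_one {h : ℝ → ℝ≥0∞} (hh : Measurable h) {m M α : ℝ} (hm : 0 < m)
    (hmM : m ≤ M) (hα : 1 ≤ α)
    (hfin : ∫⁻ t in Ioo 0 M, h t * ENNReal.ofReal ((1 + Real.log (M / t)) ^ α) ≠ ⊤) :
    ∑' k : ℕ, ∫⁻ t in Ioo 0 (m * (1 / 2 : ℝ) ^ k), h t ≠ ⊤ := by
  have e : ∀ k : ℕ, ∫⁻ t in Ioo 0 (m * (1 / 2 : ℝ) ^ k), h t =
      ∫⁻ t in Ioo 0 M, (Ioo 0 (m * (1 / 2 : ℝ) ^ k)).indicator h t := by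
    intro k
    have hk : (1 / 2 : ℝ) ^ k ≤ 1 := pow_le_one₀ (by norm_num) (by norm_num)
    rw [setLIntegral_indicator measurableSet_Ioo,
      inter_eq_left.2 (Ioo_subset_Ioo_right (by nlinarith))]
  simp_rw [e]
  rw [← lintegral_tsum fun k => (hh.indicator measurableSet_Ioo).aemeasurable]
  refine ne_top_of_le_ne_top (ENNReal.mul_ne_top (ENNReal.ofReal_ne_top (r := 2)) hfin) ?_
  rw [← lintegral_const_mul' _ _ ENNReal.ofReal_ne_top]
  refine setLIntegral_mono' measurableSet_Ioo fun t ht => ?_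
  have hlog : 0 ≤ Real.log (M / t) := Real.log_nonneg ((one_le_div ht.1).2 ht.2.le)
  have hl2 : 1 / 2 < Real.log 2 := by linarith [Real.log_two_gt_d9]
  set N : ℕ := ⌊Real.log (M / t) / Real.log 2⌋₊ + 1 with hN
  have hzero : ∀ k ∉ Finset.range N, (Ioo 0 (m * (1 / 2 : ℝ) ^ k)).indicator h t = 0 := by
    intro k hk
    refine indicator_of_notMem (fun hmem => ?_) _
    have hk1 : Real.log (M / t) / Real.log 2 < k := by
      refine (Nat.lt_floor_add_one _).trans_le ?_
      exact_mod_cast not_lt.1 (fun h => hk (Finset.mem_range.2 h))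
    rw [div_lt_iff₀ (by linarith), ← Real.log_pow,
      Real.log_lt_log_iff (div_pos (ht.1.trans ht.2) ht.1) (by positivity),
      div_lt_iff₀ ht.1] at hk1
    have h2 := hmem.2
    rw [one_div, inv_pow, ← div_eq_mul_inv, lt_div_iff₀ (by positivity)] at h2
    linarith
  rw [tsum_eq_sum hzero]
  calc ∑ k ∈ Finset.range N, (Ioo 0 (m * (1 / 2 : ℝ) ^ k)).indicator h t
      ≤ ∑ k ∈ Finset.range N, h t := Finset.sum_le_sum fun k _ => indicator_le_self _ _ _
    _ = ENNReal.ofReal N * h t := by simp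
    _ ≤ ENNReal.ofReal (2 * (1 + Real.log (M / t)) ^ α) * h t := by
        gcongr
        have h1 : (N : ℝ) ≤ Real.log (M / t) / Real.log 2 + 1 := by
          rw [hN]; push_cast
          linarith [Nat.floor_le (a := Real.log (M / t) / Real.log 2) (by positivity)]
        have h2 : Real.log (M / t) / Real.log 2 ≤ 2 * Real.log (M / t) := by
          rw [div_le_iff₀ (by linarith)]; nlinarith
        have h3 : 1 + Real.log (M / t) ≤ (1 + Real.log (M / t)) ^ α :=
          Real.self_le_rpow_of_one_le (by linarith) hα
        linarith
    _ = _ := by rw [ENNReal.ofReal_mul two_pos.le]; ring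

/-- The series for `p = s > 1`: the logarithmic weight is at least `(1 + k s log 2) ^ α` on the
`k`-th interval. -/
lemma series_ne_top_of_zygmund {h : ℝ → ℝ≥0∞} {m M s α : ℝ} (hm : 0 < m)
    (hmM : m ≤ M) (hs : 1 ≤ s) (hα : 1 < α)
    (hfin : ∫⁻ t in Ioo 0 M, (h t * ENNReal.ofReal ((1 + Real.log (M / t)) ^ α)) ^ s ≠ ⊤) :
    ∑' k : ℕ, (∫⁻ t in Ioo 0 (m * ((1 / 2 : ℝ) ^ s) ^ k), h t ^ s) ^ (1 / s) ≠ ⊤ := by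
  have hs0 : 0 < s := by linarith
  set Z := ∫⁻ t in Ioo 0 M, (h t * ENNReal.ofReal ((1 + Real.log (M / t)) ^ α)) ^ s with hZ
  have hZt : Z ^ (1 / s) ≠ ⊤ := ENNReal.rpow_ne_top_of_nonneg (by positivity) hfin
  have hq0 : (0 : ℝ) < (1 / 2) ^ s := by positivity
  have hq1 : (1 / 2 : ℝ) ^ s ≤ 1 := Real.rpow_le_one (by norm_num) (by norm_num) hs0.le
  have hterm : ∀ k : ℕ, (∫⁻ t in Ioo 0 (m * ((1 / 2 : ℝ) ^ s) ^ k), h t ^ s) ^ (1 / s) ≤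
      ENNReal.ofReal (2 ^ α * (((k + 1 : ℕ) : ℝ) ^ α)⁻¹) * Z ^ (1 / s) := by
    intro k
    set w : ℝ := (((k + 1 : ℕ) : ℝ) / 2) ^ α with hw
    have hw0 : 0 < w := by positivity
    have hk : ((1 / 2 : ℝ) ^ s) ^ k ≤ 1 := pow_le_one₀ hq0.le hq1
    have hI : ENNReal.ofReal w ^ s * ∫⁻ t in Ioo 0 (m * ((1 / 2 : ℝ) ^ s) ^ k), h t ^ s ≤ Z := by
      rw [← lintegral_const_mul' _ _ (ENNReal.rpow_ne_top_of_nonneg hs0.le ENNReal.ofReal_ne_top)]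
      refine le_trans (setLIntegral_mono' measurableSet_Ioo fun t ht => ?_)
        (lintegral_mono_set (Ioo_subset_Ioo_right (by nlinarith)))
      rw [mul_comm, ← ENNReal.mul_rpow_of_nonneg _ _ hs0.le]
      gcongr
      have hMt : (2 : ℝ) ^ (s * k) ≤ M / t := by
        rw [le_div_iff₀ ht.1]
        have h2 := ht.2.le
        rw [one_div, Real.inv_rpow two_pos.le, inv_pow, ← div_eq_mul_inv,
          le_div_iff₀ (by positivity), ← Real.rpow_natCast, ← Real.rpow_mul two_pos.le] at h2
        linarith
      have hlog : s * k * Real.log 2 ≤ Real.log (M / t) := by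
        rw [← Real.log_rpow two_pos]
        exact Real.log_le_log (by positivity) hMt
      have hl2 : 1 / 2 < Real.log 2 := by linarith [Real.log_two_gt_d9]
      have h3 : (k : ℝ) * (1 / 2) ≤ s * k * Real.log 2 := by
        have : (k : ℝ) ≤ s * k := le_mul_of_one_le_left (by positivity) hs
        gcongr
      rw [hw]
      gcongr
      push_cast
      linarith
    have hI2 := ENNReal.rpow_le_rpow hI (z := 1 / s) (by positivity)
    rw [ENNReal.mul_rpow_of_nonneg _ _ (by positivity), ← ENNReal.rpow_mul,
      mul_one_div_cancel hs0.ne', ENNReal.rpow_one] at hI2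
    have e : (2 : ℝ) ^ α * (((k + 1 : ℕ) : ℝ) ^ α)⁻¹ = w⁻¹ := by
      rw [hw, Real.div_rpow (by positivity) two_pos.le, inv_div, div_eq_mul_inv]
    rw [e, ENNReal.ofReal_inv_of_pos hw0]
    rwa [mul_comm (ENNReal.ofReal w)⁻¹, ← div_eq_mul_inv, ENNReal.le_div_iff_mul_le
      (Or.inl (by simpa using hw0)) (Or.inl ENNReal.ofReal_ne_top),
      mul_comm _ (ENNReal.ofReal w)]
  refine ne_top_of_le_ne_top ?_ (ENNReal.tsum_le_tsum hterm)
  rw [ENNReal.tsum_mul_right]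
  refine ENNReal.mul_ne_top ?_ hZt
  have hsum : Summable fun k : ℕ => (2 : ℝ) ^ α * (((k + 1 : ℕ) : ℝ) ^ α)⁻¹ :=
    ((summable_nat_add_iff 1).2 (Real.summable_nat_rpow_inv.2 hα)).mul_left _
  rw [← ENNReal.ofReal_tsum_of_nonneg (fun k => by positivity) hsum]
  exact ENNReal.ofReal_ne_top

/-- The series for `p < s`: splitting `(0, m qᵏ)` geometrically and exchanging sums bounds it by
the series of `2⁻ⁱ h (m qⁱ⁺¹)`, a discretisation of the Lorentz norm. -/
lemma series_ne_top_of_lorentz {h : ℝ → ℝ≥0∞} (hh : Antitone h) {m p s : ℝ} (hm : 0 < m)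
    (hp : 1 ≤ p) (hps : p < s)
    (hfin : ∫⁻ t in Ioi (0 : ℝ), h t * ENNReal.ofReal (t ^ (1 / s - 1)) ≠ ⊤) :
    ∑' k : ℕ, ENNReal.ofReal (((1 / 2 : ℝ) ^ (1 - s / p)) ^ k) *
      (∫⁻ t in Ioo 0 (m * ((1 / 2 : ℝ) ^ s) ^ k), h t ^ p) ^ (1 / p) ≠ ⊤ := by
  have hp0 : 0 < p := by linarith
  have hs0 : 0 < s := by linarith
  set q : ℝ := (1 / 2) ^ s with hq
  have hq0 : 0 < q := by positivity
  have hq1 : q < 1 := Real.rpow_lt_one (by norm_num) (by norm_num) hs0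
  set a : ℕ → ℝ := fun i => m * q ^ i with ha
  have ha0 : ∀ i, 0 < a i := fun i => by positivity
  have hanti : Antitone a := fun i j hij =>
    mul_le_mul_of_nonneg_left (pow_le_pow_of_le_one hq0.le hq1.le hij) hm.le
  have halim : Tendsto a atTop (𝓝 0) := by
    simpa using (tendsto_pow_atTop_nhds_zero_of_lt_one hq0.le hq1).const_mul m
  set ϑ : ℝ := (1 / 2) ^ (1 - s / p) with hϑ
  have hϑ0 : 0 < ϑ := by positivity
  have hϑ1 : 1 < ϑ := by
    refine Real.one_lt_rpow_of_pos_of_lt_one_of_neg (by norm_num) (by norm_num) ?_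
    have : 1 < s / p := (one_lt_div hp0).2 hps
    linarith
  set b : ℕ → ℝ≥0∞ := fun i => ENNReal.ofReal (a i ^ (1 / p)) * h (a (i + 1)) with hb
  -- Split `(0, a k)` into the intervals `[a (j + k + 1), a (j + k))` and bound `h` on each.
  have hI : ∀ k : ℕ, (∫⁻ t in Ioo 0 (a k), h t ^ p) ^ (1 / p) ≤ ∑' j, b (j + k) := by
    intro k
    have hsub : Ioo 0 (a k) ⊆ ⋃ j, Ico (a (j + k + 1)) (a (j + k)) := by
      intro t ht
      have hex : ∃ j, a (j + k + 1) ≤ t :=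
        (((tendsto_add_atTop_iff_nat (k + 1)).2 halim).eventually (ge_mem_nhds ht.1)).exists
      classical
      refine mem_iUnion.2 ⟨Nat.find hex, Nat.find_spec hex, ?_⟩
      rcases hj : Nat.find hex with _ | j
      · simpa using ht.2
      · have := Nat.find_min hex (m := j) (by omega)
        rw [show j + 1 + k = j + k + 1 by ring]
        exact not_le.1 this
    have h1 : ∫⁻ t in Ioo 0 (a k), h t ^ p ≤
        ∑' j, ENNReal.ofReal (a (j + k)) * h (a (j + k + 1)) ^ p := by
      refine (lintegral_mono_set hsub).trans ((lintegral_iUnion_le _ _).trans ?_)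
      refine ENNReal.tsum_le_tsum fun j => ?_
      calc ∫⁻ t in Ico (a (j + k + 1)) (a (j + k)), h t ^ p
          ≤ ∫⁻ t in Ico (a (j + k + 1)) (a (j + k)), h (a (j + k + 1)) ^ p :=
            setLIntegral_mono' measurableSet_Ico fun t ht =>
              ENNReal.rpow_le_rpow (hh ht.1) hp0.le
        _ = h (a (j + k + 1)) ^ p * ENNReal.ofReal (a (j + k) - a (j + k + 1)) := by
            rw [setLIntegral_const, Real.volume_Ico]
        _ ≤ _ := by
            rw [mul_comm]
            gcongr
            linarith [ha0 (j + k + 1)]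
    refine (ENNReal.rpow_le_rpow h1 (by positivity)).trans ?_
    refine (rpow_tsum_le_tsum_rpow _ (by positivity) ((div_le_one hp0).2 hp)).trans (le_of_eq ?_)
    refine tsum_congr fun j => ?_
    rw [ENNReal.mul_rpow_of_nonneg _ _ (by positivity), ← ENNReal.rpow_mul,
      mul_one_div_cancel hp0.ne', ENNReal.rpow_one, ENNReal.ofReal_rpow_of_pos (ha0 _)]
  -- Here `ϑ ^ i * a i ^ (1 / p)` is a multiple of `2⁻ⁱ`, and so is `a (i + 1) ^ (1 / s)`.
  have hT : ∑' i, ENNReal.ofReal (ϑ ^ i) * b i ≠ ⊤ := by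
    set K : ℝ := m ^ (1 / p) * (m ^ (1 / s) * (1 - q) * (1 / 2))⁻¹ with hK
    have hden : 0 < m ^ (1 / s) * (1 - q) * (1 / 2) := by
      have : 0 < 1 - q := by linarith
      positivity
    have hK0 : 0 ≤ K := by positivity
    refine ne_top_of_le_ne_top (ENNReal.mul_ne_top (ENNReal.ofReal_ne_top (r := K)) hfin) ?_
    have hdisj := hanti.pairwise_disjoint_on_Ico_succ
    have hlow : ∑' i, ∫⁻ t in Ico (a (i + 2)) (a (i + 1)), h t * ENNReal.ofReal (t ^ (1 / s - 1)) ≤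
        ∫⁻ t in Ioi (0 : ℝ), h t * ENNReal.ofReal (t ^ (1 / s - 1)) := by
      rw [← lintegral_iUnion (fun i => measurableSet_Ico)]
      · refine lintegral_mono_set (iUnion_subset fun i t ht => (ha0 _).trans_le ht.1)
      · intro i j hij
        exact hdisj (show i + 1 ≠ j + 1 by omega)
    refine le_trans ?_ (mul_le_mul_right hlow _)
    rw [← ENNReal.tsum_mul_left]
    refine ENNReal.tsum_le_tsum fun i => ?_
    have hpt : ENNReal.ofReal (a (i + 1) ^ (1 / s) * (1 - q)) * h (a (i + 1)) ≤
        ∫⁻ t in Ico (a (i + 2)) (a (i + 1)), h t * ENNReal.ofReal (t ^ (1 / s - 1)) := by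
      calc ENNReal.ofReal (a (i + 1) ^ (1 / s) * (1 - q)) * h (a (i + 1))
          = h (a (i + 1)) * ENNReal.ofReal (a (i + 1) ^ (1 / s - 1)) *
              ENNReal.ofReal (a (i + 1) - a (i + 2)) := by
            rw [mul_assoc, ← ENNReal.ofReal_mul (Real.rpow_nonneg (ha0 _).le _), mul_comm]
            congr 2
            have : a (i + 2) = a (i + 1) * q := by simp only [ha]; ring
            rw [this, Real.rpow_sub (ha0 _), Real.rpow_one]
            have := (ha0 (i + 1)).ne'
            field_simp
        _ = ∫⁻ t in Ico (a (i + 2)) (a (i + 1)),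
              h (a (i + 1)) * ENNReal.ofReal (a (i + 1) ^ (1 / s - 1)) := by
            rw [setLIntegral_const, Real.volume_Ico]
        _ ≤ _ := by
            refine setLIntegral_mono' measurableSet_Ico fun t ht => ?_
            refine mul_le_mul' (hh ht.2.le) (ENNReal.ofReal_le_ofReal ?_)
            refine Real.rpow_le_rpow_of_nonpos ((ha0 _).trans_le ht.1) ht.2.le ?_
            have : 1 / s ≤ 1 := (div_le_one hs0).2 (by linarith)
            linarith
    refine le_trans (le_of_eq ?_) (mul_le_mul_right hpt _)
    rw [hb]
    beta_reduce
    rw [← mul_assoc, ← mul_assoc, ← ENNReal.ofReal_mul (by positivity), ← ENNReal.ofReal_mul hK0]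
    congr 2
    have hpow : ∀ (e : ℝ) (n : ℕ), a n ^ e = m ^ e * (q ^ e) ^ n := by
      intro e n
      rw [ha]
      beta_reduce
      rw [Real.mul_rpow hm.le (by positivity), ← Real.rpow_natCast, ← Real.rpow_natCast,
        ← Real.rpow_mul hq0.le, ← Real.rpow_mul hq0.le, mul_comm e]
    have hqs : q ^ (1 / s) = 1 / 2 := by
      rw [hq, ← Real.rpow_mul (by norm_num), mul_one_div_cancel hs0.ne', Real.rpow_one]
    have hqp : ϑ * q ^ (1 / p) = 1 / 2 := by
      rw [hq, hϑ, ← Real.rpow_mul (by norm_num), ← Real.rpow_add (by norm_num)]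
      rw [show 1 - s / p + s * (1 / p) = 1 by ring, Real.rpow_one]
    rw [hpow, hpow, hqs, show ϑ ^ i * (m ^ (1 / p) * (q ^ (1 / p)) ^ i) =
      m ^ (1 / p) * (ϑ * q ^ (1 / p)) ^ i by rw [mul_pow]; ring, hqp, hK, pow_succ]
    have h1 : m ^ (1 / s) ≠ 0 := by positivity
    have h2 : 1 - q ≠ 0 := by linarith
    field_simp
  have hG : ∑' j : ℕ, ENNReal.ofReal ((ϑ⁻¹) ^ j) ≠ ⊤ := by
    rw [← ENNReal.ofReal_tsum_of_nonneg (fun j => by positivity)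
      (summable_geometric_of_lt_one (by positivity) (inv_lt_one_of_one_lt₀ hϑ1))]
    exact ENNReal.ofReal_ne_top
  refine ne_top_of_le_ne_top (ENNReal.mul_ne_top hG hT) ?_
  calc ∑' k : ℕ, ENNReal.ofReal (ϑ ^ k) * (∫⁻ t in Ioo 0 (a k), h t ^ p) ^ (1 / p)
      ≤ ∑' k : ℕ, ENNReal.ofReal (ϑ ^ k) * ∑' j, b (j + k) :=
        ENNReal.tsum_le_tsum fun k => mul_le_mul_right (hI k) _
    _ = ∑' k : ℕ, ∑' j : ℕ, ENNReal.ofReal ((ϑ⁻¹) ^ j) *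
          (ENNReal.ofReal (ϑ ^ (j + k)) * b (j + k)) := by
        refine tsum_congr fun k => ?_
        rw [← ENNReal.tsum_mul_left]
        refine tsum_congr fun j => ?_
        have e : ϑ ^ k = (ϑ⁻¹) ^ j * ϑ ^ (j + k) := by
          rw [pow_add, ← mul_assoc, ← mul_pow, inv_mul_cancel₀ hϑ0.ne', one_pow, one_mul]
        rw [e, ENNReal.ofReal_mul (by positivity), mul_assoc]
    _ = ∑' j : ℕ, ENNReal.ofReal ((ϑ⁻¹) ^ j) *
          ∑' k : ℕ, ENNReal.ofReal (ϑ ^ (j + k)) * b (j + k) := by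
        rw [ENNReal.tsum_comm]
        simp_rw [ENNReal.tsum_mul_left]
    _ ≤ ∑' j : ℕ, ENNReal.ofReal ((ϑ⁻¹) ^ j) * ∑' i, ENNReal.ofReal (ϑ ^ i) * b i := by
        refine ENNReal.tsum_le_tsum fun j => mul_le_mul_right ?_ _
        exact ENNReal.tsum_comp_le_tsum_of_injective (add_right_injective j)
          fun i => ENNReal.ofReal (ϑ ^ i) * b i
    _ = _ := ENNReal.tsum_mul_right

/-! ### The four integrability cases and the theorem -/

/-- The upper gradient, cut off to a ball, has finite norm. -/
lemma nrm_indicator_lt_top (X : QBFL P μ) {g : P → ℝ≥0∞} (hg : X.nrmE g < ⊤) (B : Set P) :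
    X.nrm (B.indicator fun x => (g x : EReal)) < ⊤ := by
  refine (X.nrm_mono _ _ (Eventually.of_forall fun x => ?_)).trans_lt hg
  by_cases hx : x ∈ B <;> simp [hx]

lemma lintegral_rpow_ne_top_of_embedsLp {X : QBFL P μ} {p : ℝ} (hp : 0 < p)
    (hX : EmbedsLpLoc X p) {g : P → ℝ≥0∞} (hg : X.nrmE g < ⊤) (x₀ : P) :
    ∫⁻ y in ball x₀ 2, g y ^ p ∂μ ≠ ⊤ := by
  obtain ⟨c, hc, h⟩ := hX x₀ 2 two_pos
  have h1 := (h fun x => (g x : EReal)).trans_lt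
    (ENNReal.mul_lt_top hc (nrm_indicator_lt_top X hg _))
  simp only [abs_coe_ennreal] at h1
  intro htop
  rw [htop, ENNReal.top_rpow_of_pos (by positivity)] at h1
  exact lt_irrefl _ h1

lemma lintegral_zygmund_ne_top_of_embeds {X : QBFL P μ} {s α : ℝ} (hs : 0 < s)
    (hX : EmbedsZygmundLoc X s α) {g : P → ℝ≥0∞} (hg : X.nrmE g < ⊤) (x₀ : P) :
    ∫⁻ t in Ioo 0 (μ.real (ball x₀ 2)),
      (decRearr μ ((ball x₀ 2).indicator fun x => (g x : EReal)) t *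
        ENNReal.ofReal ((1 + Real.log (μ.real (ball x₀ 2) / t)) ^ α)) ^ s ≠ ⊤ := by
  obtain ⟨c, hc, h⟩ := hX x₀ 2 two_pos
  have h1 := (h fun x => (g x : EReal)).trans_lt
    (ENNReal.mul_lt_top hc (nrm_indicator_lt_top X hg _))
  intro htop
  rw [zygNorm] at h1
  change ∫⁻ t in Ioo 0 (μ (ball x₀ 2)).toReal, _ = _ at htop
  simp only [Measure.real] at htop
  rw [htop, ENNReal.top_rpow_of_pos (by positivity)] at h1
  exact lt_irrefl _ h1

lemma lintegral_lorentz_ne_top_of_embeds {X : QBFL P μ} {s : ℝ} (hs : 0 < s)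
    (hX : EmbedsLorentzLoc X s) {g : P → ℝ≥0∞} (hg : X.nrmE g < ⊤) (x₀ : P) :
    ∫⁻ t in Ioi (0 : ℝ), decRearr μ ((ball x₀ 2).indicator fun x => (g x : EReal)) t *
      ENNReal.ofReal (t ^ (1 / s - 1)) ≠ ⊤ := by
  obtain ⟨c, hc, h⟩ := hX x₀ 2 two_pos
  have h1 := (h fun x => (g x : EReal)).trans_lt
    (ENNReal.mul_lt_top hc (nrm_indicator_lt_top X hg _))
  intro htop
  rw [lorentzNorm, htop, ENNReal.mul_top (by simpa using hs)] at h1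
  exact lt_irrefl _ h1

/-- In each of the four cases, the chain sums of an upper gradient in `X` tend to zero locally
uniformly. -/
lemma chain_bound_of_cases [BorelSpace P]
    (hball : ∀ (x : P) (r : ℝ), 0 < r → 0 < μ (ball x r) ∧ μ (ball x r) < ⊤)
    (X : QBFL P μ)
    {s c : ℝ} (hs : 0 < s) (hc : 0 < c)
    (hdim : ∀ (x y : P) (r R : ℝ), 0 < r → r ≤ R → y ∈ ball x R →
      c * (r / R) ^ s * μ.real (ball x R) ≤ μ.real (ball y r))
    {p cPI lam : ℝ} (hp1 : 1 ≤ p) (hcPI : 0 < cPI) (hlam : 1 ≤ lam)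
    (hcase :
      (s < p ∧ EmbedsLpLoc X p) ∨
      (p = 1 ∧ s = 1 ∧ ∃ α : ℝ, 1 ≤ α ∧ EmbedsZygmundLoc X s α) ∨
      (1 < p ∧ p = s ∧ ∃ α : ℝ, 1 < α ∧ EmbedsZygmundLoc X s α) ∨
      (p < s ∧ EmbedsLorentzLoc X s))
    {g : P → ℝ≥0∞} (hg : Measurable g) (hgX : X.nrmE g < ⊤) (x₀ : P) :
    ∃ r₁ > 0, ∃ β : ℕ → ℝ≥0∞, Tendsto β atTop (𝓝 0) ∧
      ∀ z ∈ ball x₀ 1, ∀ n : ℕ, chainSum μ g p cPI lam z (r₁ * (1 / 2) ^ n) ≤ β n := by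
  have hp : 0 < p := by linarith
  rcases hcase with ⟨hsp, hX⟩ | ⟨rfl, rfl, α, hα, hX⟩ | ⟨hp', rfl, α, hα, hX⟩ | ⟨hps, hX⟩
  · obtain ⟨C, hC, h⟩ := chainSum_le_of_lt hball hc hdim hp hsp hcPI hlam x₀
      (lintegral_rpow_ne_top_of_embedsLp hp hX hgX x₀)
    have hθ : 0 < 1 - s / p := by
      have : s / p < 1 := (div_lt_one hp).2 hsp
      linarith
    have hlam0 : 0 < lam := by linarith
    refine ⟨1 / lam, by positivity, fun n => ENNReal.ofReal
      (C * (1 / lam * (1 / 2) ^ n) ^ (1 - s / p)), ?_, fun z hz n => ?_⟩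
    · have h1 : Tendsto (fun n : ℕ => 1 / lam * (1 / 2 : ℝ) ^ n) atTop (𝓝 0) := by
        simpa using (tendsto_pow_atTop_nhds_zero_of_lt_one (r := (1 / 2 : ℝ)) (by norm_num)
          (by norm_num)).const_mul (1 / lam)
      have h2 := (h1.rpow_const (p := 1 - s / p) (Or.inr hθ.le)).const_mul C
      rw [Real.zero_rpow hθ.ne', mul_zero] at h2
      simpa using ENNReal.tendsto_ofReal h2
    · have hk1 : (1 / 2 : ℝ) ^ n ≤ 1 := pow_le_one₀ (by norm_num) (by norm_num)
      refine h z hz _ (by positivity) ?_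
      rwa [← mul_assoc, mul_one_div_cancel hlam0.ne', one_mul]
  · refine chain_bound_of_rearr_summable hball hc hdim hp hcPI hlam hg x₀ fun m hm hmM => ?_
    have h1 := lintegral_zygmund_ne_top_of_embeds one_pos hX hgX x₀
    simp only [ENNReal.rpow_one] at h1
    simpa using series_ne_top_of_zygmund_one (decRearr_antitone μ _).measurable hm hmM hα h1
  · refine chain_bound_of_rearr_summable hball hc hdim hp hcPI hlam hg x₀ fun m hm hmM => ?_
    have h1 := series_ne_top_of_zygmund hm hmM hp1 hα
      (lintegral_zygmund_ne_top_of_embeds hp hX hgX x₀)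
    simpa [div_self hp.ne'] using h1
  · refine chain_bound_of_rearr_summable hball hc hdim hp hcPI hlam hg x₀ fun m hm hmM => ?_
    exact series_ne_top_of_lorentz (decRearr_antitone μ _) hm hp1 hps
      (lintegral_lorentz_ne_top_of_embeds hs hX hgX x₀)

/-- A Hölder estimate for a continuous function passes from a dense subset of an open set to the
whole set. -/
lemma holderOnWith_of_dense {v : P → ℝ} (hv : Continuous v) {D U : Set P} (hD : Dense D)
    (hU : IsOpen U) {C r : ℝ≥0} (h : ∀ x ∈ D ∩ U, ∀ y ∈ D ∩ U,
      edist (v x) (v y) ≤ C * edist x y ^ (r : ℝ)) : HolderOnWith C r v U := by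
  have hsub : U ⊆ closure (D ∩ U) := by
    rw [inter_comm]; exact hD.open_subset_closure_inter hU
  have hcl : IsClosed {z : P × P | edist (v z.1) (v z.2) ≤ C * edist z.1 z.2 ^ (r : ℝ)} := by
    refine isClosed_le (by fun_prop) ?_
    refine ENNReal.continuous_const_mul ENNReal.coe_ne_top |>.comp ?_
    exact ENNReal.continuous_rpow_const.comp continuous_edist
  intro x hx y hy
  have hmem : (x, y) ∈ closure ((D ∩ U) ×ˢ (D ∩ U)) := by
    rw [closure_prod_eq]; exact ⟨hsub hx, hsub hy⟩
  exact hcl.closure_subset_iff.2 (fun z hz => h z.1 hz.1 z.2 hz.2) hmem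

/-- (Continuous representatives of Newtonian functions.) -/
theorem newtonian_continuous_representative
    {P : Type*} [MetricSpace P] [MeasurableSpace P] [BorelSpace P]
    (μ : MeasureTheory.Measure P) [SigmaFinite μ]
    (hball : ∀ (x : P) (r : ℝ), 0 < r → 0 < μ (Metric.ball x r) ∧ μ (Metric.ball x r) < ⊤)
    (X : QBFL P μ)
    (cdbl : ℝ≥0∞) (hcdbl : 1 ≤ cdbl) (hdbl : IsDoublingWith μ cdbl)
    (s : ℝ) (hs : 0 < s) (cs : ℝ≥0∞) (hcs : 0 < cs) (hdim : DimensionCond μ s cs)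
    (p : ℝ) (hp1 : 1 ≤ p)
    (cPI lam : ℝ) (hcPI : 0 < cPI) (hlam : 1 ≤ lam) (hPI : PoincareInequality μ p cPI lam)
    (hcase :
      (s < p ∧ EmbedsLpLoc X p) ∨
      (p = 1 ∧ s = 1 ∧ ∃ α : ℝ, 1 ≤ α ∧ EmbedsZygmundLoc X s α) ∨
      (1 < p ∧ p = s ∧ ∃ α : ℝ, 1 < α ∧ EmbedsZygmundLoc X s α) ∨
      (p < s ∧ EmbedsLorentzLoc X s)) :
    ∀ u : P → EReal, X.memN1 u →
      ∃ v : P → ℝ, Continuous v ∧ X.memN1 (fun x => ((v x : ℝ) : EReal)) ∧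
        X.cap {x | u x ≠ ((v x : ℝ) : EReal)} = 0 ∧
        ((s < p ∧ EmbedsLpLoc X p) →
          ∀ x : P, ∃ U ∈ 𝓝 x, ∃ C : ℝ≥0,
            HolderOnWith C (Real.toNNReal (1 - s / p)) v U) := by
  intro u hu
  have hp : 0 < p := by linarith
  have hlam0 : 0 < lam := by linarith
  obtain ⟨hunX, hinf⟩ := ENNReal.add_lt_top.1 hu.2
  obtain ⟨g, hg, hgX⟩ : ∃ g, IsUpperGradient u g ∧ X.nrmE g < ⊤ := by
    simpa [iInf_lt_iff] using hinf
  obtain ⟨c, hc, hdimR⟩ := exists_real_dimensionCond hball hcs hdim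
  obtain ⟨v, D, hv, huv, hD, hest⟩ := exists_continuous_ae_eq hball hc hdimR hPI hu.1
    (X.ae_abs_ne_top hu.1 hunX.ne) hg
    (chain_bound_of_cases hball X hs hc hdimR hp1 hcPI hlam hcase hg.1 hgX)
  obtain ⟨hvN, hcap⟩ := newtonian_of_ae_eq X hu hv huv
  refine ⟨v, hv, hvN, hcap, ?_⟩
  rintro ⟨hsp, hX⟩ x₀
  have hθ : 0 < 1 - s / p := by
    have : s / p < 1 := (div_lt_one hp).2 hsp
    linarith
  obtain ⟨C, hC, hchain⟩ := chainSum_le_of_lt hball hc hdimR hp hsp hcPI hlam x₀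
    (lintegral_rpow_ne_top_of_embedsLp hp hX hgX x₀)
  set K : ℝ := 4 * (c * (1 / 4) ^ s)⁻¹ with hK
  have hK0 : 0 ≤ K := by positivity
  -- On this ball `4 λ dist x y ≤ 1`, so the chain estimate applies at scale `4 dist x y`.
  have hrad : 1 / (8 * lam) ≤ 1 := by
    rw [div_le_one (by positivity)]; linarith
  refine ⟨ball x₀ (1 / (8 * lam)), ball_mem_nhds _ (by positivity),
    Real.toNNReal (K * (2 * (C * 4 ^ (1 - s / p)))), ?_⟩
  refine holderOnWith_of_dense hv hD isOpen_ball fun x hx y hy => ?_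
  rcases eq_or_ne x y with rfl | hxy
  · simp
  have hδ : 0 < dist x y := dist_pos.2 hxy
  have hδ1 : lam * (4 * dist x y) ≤ 1 := by
    have h1 : dist x y ≤ 1 / (8 * lam) + 1 / (8 * lam) :=
      (dist_triangle_right x y x₀).trans (add_le_add (mem_ball.1 hx.2).le (mem_ball.1 hy.2).le)
    calc lam * (4 * dist x y) ≤ lam * (4 * (1 / (8 * lam) + 1 / (8 * lam))) := by gcongr
      _ = 1 := by field_simp; norm_num
  have hb : ∀ z ∈ D ∩ ball x₀ (1 / (8 * lam)), chainSum μ g p cPI lam z (4 * dist x y) ≤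
      ENNReal.ofReal (C * (4 * dist x y) ^ (1 - s / p)) := fun z hz =>
    hchain z (ball_subset_ball hrad hz.2) _ (by positivity) hδ1
  calc edist (v x) (v y)
      ≤ ENNReal.ofReal K * (chainSum μ g p cPI lam x (4 * dist x y) +
          chainSum μ g p cPI lam y (4 * dist x y)) := hest x hx.1 y hy.1 _ hδ le_rfl
    _ ≤ ENNReal.ofReal K * (ENNReal.ofReal (C * (4 * dist x y) ^ (1 - s / p)) +
          ENNReal.ofReal (C * (4 * dist x y) ^ (1 - s / p))) := by
        gcongr
        exacts [hb x hx, hb y hy]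
    _ = ENNReal.ofReal (K * (2 * (C * 4 ^ (1 - s / p)))) *
          edist x y ^ ((Real.toNNReal (1 - s / p) : ℝ≥0) : ℝ) := by
        rw [Real.coe_toNNReal _ hθ.le, edist_dist, ENNReal.ofReal_rpow_of_pos hδ,
          ← ENNReal.ofReal_add (by positivity) (by positivity), ← ENNReal.ofReal_mul hK0,
          ← ENNReal.ofReal_mul (by positivity), Real.mul_rpow (by norm_num) hδ.le]
        ring_nf
    _ = _ := rfl

end
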